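/- Let a₁, a₂ ≠ 0 be real numbers whose ratio satisfies a₂/a₁ < 0, a₂/a₁ = 1, or a₂/a₁ > 4, and let s > −3/4. Then there exist b ∈ (1/2, 1), ε > 0 and C > 0, depending only on s, b and b', such that for all σ ≥ 0, all b' ∈ [b, b+ε), and all Schwartz functions f, g on ℝ²: ‖∂_x(fg)‖_{X_{a₁}^{σ,s,b'−1}} ≤ C ‖f‖_{X_{a₂}^{σ,s,b}} ‖g‖_{X_{a₂}^{σ,s,b}}. -/

import Mathlib

open MeasureTheory Set Filter
open scoped ENNReal

/-- Space-time Fourier transform `f̂(τ,ξ) = ∫∫ e^{-i(tτ + xξ)} f(t,x) dt dx`. -/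
noncomputable def FT2 (f : ℝ → ℝ → ℂ) (τ ξ : ℝ) : ℂ :=
  ∫ t : ℝ, ∫ x : ℝ, Complex.exp (-Complex.I * (t * τ + x * ξ)) * f t x

/-- Gevrey–Bourgain norm `‖f‖_{X_a^{σ,s,b}}`, valued in `ℝ≥0∞`. -/
noncomputable def XNorm (a σ s b : ℝ) (f : ℝ → ℝ → ℂ) : ℝ≥0∞ :=
  (∫⁻ τ : ℝ, ∫⁻ ξ : ℝ, ENNReal.ofReal
      (Real.exp (2 * σ * |ξ|) * (1 + |ξ|) ^ (2 * s) *
        (1 + |τ - a * ξ ^ 3|) ^ (2 * b) * ‖FT2 f τ ξ‖ ^ 2)) ^ (1/2 : ℝ)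

open FourierTransform in
/-- Transfer of a Schwartz function on `ℝ × ℝ` to the Euclidean plane. -/
noncomputable def liftS (f : SchwartzMap (ℝ × ℝ) ℂ) : SchwartzMap (WithLp 2 (ℝ × ℝ)) ℂ :=
  SchwartzMap.compCLMOfContinuousLinearEquiv ℂ (WithLp.prodContinuousLinearEquiv 2 ℝ ℝ ℝ) f

lemma liftS_apply (f : SchwartzMap (ℝ × ℝ) ℂ) (z : WithLp 2 (ℝ × ℝ)) :
    liftS f z = f (z.ofLp) := rfl

open FourierTransform in
lemma FT2_eq (f : SchwartzMap (ℝ × ℝ) ℂ) (τ ξ : ℝ) :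
    FT2 (fun t x => f (t, x)) τ ξ =
      𝓕 (liftS f) (WithLp.toLp 2 (τ / (2 * Real.pi), ξ / (2 * Real.pi))) := by
  rw [SchwartzMap.fourier_coe, Real.fourier_eq']
  rw [← (WithLp.volume_preserving_toLp ℝ ℝ).integral_comp
    (MeasurableEquiv.toLp 2 (ℝ × ℝ)).measurableEmbedding]
  rw [Measure.volume_eq_prod, integral_prod]
  · unfold FT2
    congr 1; ext t; congr 1; ext x
    simp only [liftS_apply, smul_eq_mul]
    congr 2
    simp [WithLp.prod_inner_apply]
    have : (Real.pi : ℂ) ≠ 0 := by exact_mod_cast Real.pi_ne_zero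
    field_simp
  · rw [← Measure.volume_eq_prod]
    have hf : Integrable (fun z : ℝ × ℝ => f z) := f.integrable
    refine hf.mono ?_ ?_
    · apply Continuous.aestronglyMeasurable
      have h1 : Continuous fun z : ℝ × ℝ => (WithLp.toLp 2 z : WithLp 2 (ℝ × ℝ)) :=
        WithLp.prod_continuous_toLp 2 ℝ ℝ
      have h2 := f.continuous
      simp only [liftS_apply, smul_eq_mul]
      fun_prop
    · filter_upwards with z
      simp only [smul_eq_mul, norm_mul, liftS_apply]
      rw [Complex.norm_exp_ofReal_mul_I, one_mul]

lemma FT2_cont (f : SchwartzMap (ℝ × ℝ) ℂ) :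
    Continuous (fun z : ℝ × ℝ => FT2 (fun t x => f (t, x)) z.1 z.2) := by
  simp only [FT2_eq]
  have h1 : Continuous fun z : ℝ × ℝ => (WithLp.toLp 2 z : WithLp 2 (ℝ × ℝ)) :=
        WithLp.prod_continuous_toLp 2 ℝ ℝ
  exact (SchwartzMap.continuous _).comp (h1.comp (by fun_prop))

/-- Product of Schwartz functions. -/
noncomputable def mulS {E : Type*} [NormedAddCommGroup E] [NormedSpace ℝ E]
    (f g : SchwartzMap E ℂ) : SchwartzMap E ℂ :=
  SchwartzMap.pairing (ContinuousLinearMap.mul ℂ ℂ) f g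

lemma mulS_apply {E : Type*} [NormedAddCommGroup E] [NormedSpace ℝ E]
    (f g : SchwartzMap E ℂ) (z : E) : mulS f g z = f z * g z := rfl

open LineDeriv in
/-- The `x`-derivative of a Schwartz function. -/
noncomputable def dxS (f : SchwartzMap (ℝ × ℝ) ℂ) : SchwartzMap (ℝ × ℝ) ℂ :=
  lineDerivOp ((0, 1) : ℝ × ℝ) f

lemma dxS_apply (f : SchwartzMap (ℝ × ℝ) ℂ) (t x : ℝ) :
    dxS f (t, x) = deriv (fun y => f (t, y)) x := by
  unfold dxS
  rw [SchwartzMap.lineDerivOp_apply_eq_fderiv]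
  have h1 : HasFDerivAt f (fderiv ℝ f (t, x)) (t, x) := (f.differentiableAt).hasFDerivAt
  have h2 : HasDerivAt (fun y : ℝ => ((t, y) : ℝ × ℝ)) (0, 1) x :=
    (hasDerivAt_const x t).prodMk (hasDerivAt_id x)
  exact (h1.comp_hasDerivAt x h2).deriv.symm

open FourierTransform LineDeriv in
lemma FT2_dx (f : SchwartzMap (ℝ × ℝ) ℂ) (τ ξ : ℝ) :
    ‖FT2 (fun t x => dxS f (t, x)) τ ξ‖ = |ξ| * ‖FT2 (fun t x => f (t, x)) τ ξ‖ := by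
  rw [FT2_eq, FT2_eq]
  have : liftS (dxS f) = lineDerivOp (WithLp.toLp 2 ((0, 1) : ℝ × ℝ)) (liftS f) := by
    exact (SchwartzMap.lineDerivOp_compCLMOfContinuousLinearEquiv ℂ _ _ _).symm
  rw [this, SchwartzMap.fourier_lineDerivOp_eq]
  rw [smul_apply, SchwartzMap.smulLeftCLM_apply_apply (by fun_prop)]
  simp [WithLp.prod_inner_apply, abs_of_pos Real.pi_pos]
  rw [← mul_assoc]
  congr 1
  have := Real.pi_ne_zero
  field_simp

open FourierTransform in
lemma fourier_mulS (f g : SchwartzMap (WithLp 2 (ℝ × ℝ)) ℂ) (x : WithLp 2 (ℝ × ℝ)) :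
    𝓕 (mulS f g) x = ∫ y, 𝓕 f y * 𝓕 g (x - y) := by
  have key : ∀ h : SchwartzMap (WithLp 2 (ℝ × ℝ)) ℂ, ∀ x, 𝓕 h x = 𝓕⁻ h (-x) := by
    intro h x
    rw [SchwartzMap.fourierInv_coe, SchwartzMap.fourier_coe, Real.fourierInv_eq_fourier_neg, neg_neg]
  have h1 : mulS f g = 𝓕 (SchwartzMap.convolution (ContinuousLinearMap.mul ℂ ℂ) (𝓕⁻ f) (𝓕⁻ g)) := by
    rw [SchwartzMap.fourier_convolution]
    simp [mulS]
  have h2 : 𝓕⁻ (mulS f g) = (SchwartzMap.convolution (ContinuousLinearMap.mul ℂ ℂ) (𝓕⁻ f) (𝓕⁻ g)) := by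
    rw [h1]; simp
  rw [key, h2, SchwartzMap.convolution_apply]
  rw [convolution]
  rw [← integral_neg_eq_self]
  congr 1; ext y
  rw [key f, key g]
  simp only [ContinuousLinearMap.mul_apply']
  congr 2
  abel

lemma FT2_conv (f g : SchwartzMap (ℝ × ℝ) ℂ) (τ ξ : ℝ) :
    ENNReal.ofReal ‖FT2 (fun t x => mulS f g (t, x)) τ ξ‖ ≤
      ∫⁻ z : ℝ × ℝ, ENNReal.ofReal ‖FT2 (fun t x => f (t, x)) z.1 z.2‖ *
        ENNReal.ofReal ‖FT2 (fun t x => g (t, x)) (τ - z.1) (ξ - z.2)‖ := by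
  have h0 : liftS (mulS f g) = mulS (liftS f) (liftS g) := by ext z; rfl
  rw [FT2_eq, h0, fourier_mulS, ofReal_norm]
  refine (enorm_integral_le_lintegral_enorm _).trans ?_
  rw [← (WithLp.volume_preserving_toLp ℝ ℝ).lintegral_comp_emb
    (MeasurableEquiv.toLp 2 (ℝ × ℝ)).measurableEmbedding]
  have hpi := Real.pi_pos
  have h2 : (1:ℝ) ≤ |(2 * Real.pi) ^ 2| := by
    rw [abs_of_pos (by positivity)]
    nlinarith [Real.pi_gt_three]
  set Φ : ℝ × ℝ → ℝ≥0∞ := fun z => ENNReal.ofReal ‖FT2 (fun t x => f (t, x)) z.1 z.2‖ *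
        ENNReal.ofReal ‖FT2 (fun t x => g (t, x)) (τ - z.1) (ξ - z.2)‖ with hΦ
  have h3 : ∀ z : ℝ × ℝ, ‖(FourierTransform.fourier (liftS f)) (WithLp.toLp 2 z) *
      (FourierTransform.fourier (liftS g)) (WithLp.toLp 2 (τ / (2 * Real.pi), ξ / (2 * Real.pi)) - WithLp.toLp 2 z)‖ₑ
       = Φ ((2 * Real.pi) • z) := by
    intro z
    simp only [hΦ, FT2_eq, enorm_mul, ofReal_norm]
    congr 3
    · have : ((2 * Real.pi) • z).1 / (2 * Real.pi) = z.1 := by simp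
      have h' : ((2 * Real.pi) • z).2 / (2 * Real.pi) = z.2 := by simp
      rw [this, h']
    · rw [← WithLp.toLp_sub]
      congr 1
      ext <;> simp <;> field_simp
  rw [lintegral_congr h3]
  have h4 := Measure.addHaar_smul (volume : Measure (ℝ × ℝ)) (2 * Real.pi)
  have h5 := Measure.map_addHaar_smul (volume : Measure (ℝ × ℝ)) (r := 2 * Real.pi) (by positivity)
  have h6 : ∫⁻ z : ℝ × ℝ, Φ ((2 * Real.pi) • z) = ∫⁻ z, Φ z ∂(Measure.map (fun z : ℝ × ℝ => (2 * Real.pi) • z) volume) := by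
    rw [lintegral_map]
    · have := FT2_cont f
      have h7 := (FT2_cont g).comp (show Continuous fun z : ℝ × ℝ => ((τ - z.1, ξ - z.2) : ℝ × ℝ) by fun_prop)
      exact ((this.norm.measurable).ennreal_ofReal).mul ((h7.norm.measurable).ennreal_ofReal)
    · fun_prop
  rw [h6]
  have h5' : Measure.map (fun z : ℝ × ℝ => (2 * Real.pi) • z) volume = ENNReal.ofReal |((2 * Real.pi) ^ 2)⁻¹| • (volume : Measure (ℝ × ℝ)) := by
    rw [h5]; simp
  rw [h5', lintegral_smul_measure]
  refine mul_le_of_le_one_left (by positivity) ?_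
  rw [ENNReal.ofReal_le_one, abs_inv]
  exact inv_le_one_of_one_le₀ h2

/-- The Fourier-side pointwise bound. -/
lemma FT2_main (f g : SchwartzMap (ℝ × ℝ) ℂ) (τ ξ : ℝ) :
    ENNReal.ofReal ‖FT2 (fun t x => deriv (fun y => f (t, y) * g (t, y)) x) τ ξ‖ ≤
      ENNReal.ofReal |ξ| * ∫⁻ z : ℝ × ℝ, ENNReal.ofReal ‖FT2 (fun t x => f (t, x)) z.1 z.2‖ *
        ENNReal.ofReal ‖FT2 (fun t x => g (t, x)) (τ - z.1) (ξ - z.2)‖ := by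
  have h : (fun t x => deriv (fun y => f (t, y) * g (t, y)) x) =
      fun t x => dxS (mulS f g) (t, x) := by
    ext t x; rw [dxS_apply]; rfl
  rw [h, FT2_dx, ENNReal.ofReal_mul (abs_nonneg _)]
  gcongr
  exact FT2_conv f g τ ξ

lemma FT2_main_cont (f g : SchwartzMap (ℝ × ℝ) ℂ) :
    Continuous (fun z : ℝ × ℝ => FT2 (fun t x => deriv (fun y => f (t, y) * g (t, y)) x) z.1 z.2) := by
  have h : (fun t x => deriv (fun y => f (t, y) * g (t, y)) x) =
      fun t x => dxS (mulS f g) (t, x) := by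
    ext t x; rw [dxS_apply]; rfl
  rw [h]
  exact FT2_cont _

/-- The `L²` norm of a nonnegative function. -/
noncomputable def n2 {α : Type*} [MeasureSpace α] (F : α → ℝ≥0∞) : ℝ≥0∞ :=
  (∫⁻ z, F z ^ 2) ^ (1/2 : ℝ)

lemma n2_sq {α : Type*} [MeasureSpace α] (F : α → ℝ≥0∞) : n2 F ^ 2 = ∫⁻ z, F z ^ 2 := by
  unfold n2
  rw [← ENNReal.rpow_natCast, ← ENNReal.rpow_mul]
  norm_num

lemma le_of_sq_le_sq_enn {a b : ℝ≥0∞} (h : a ^ 2 ≤ b ^ 2) : a ≤ b := by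
  by_contra hc
  push Not at hc
  exact absurd h (not_le.mpr (ENNReal.pow_lt_pow_left (by norm_num) hc))

lemma cs_n2 {α : Type*} [MeasureSpace α] {F G : α → ℝ≥0∞} (hF : Measurable F)
    (hG : Measurable G) : ∫⁻ z, F z * G z ≤ n2 F * n2 G := by
  have := ENNReal.lintegral_mul_le_Lp_mul_Lq (volume : Measure α)
    (p := 2) (q := 2) ⟨by norm_num, by norm_num, by norm_num⟩ hF.aemeasurable hG.aemeasurable
  simpa [n2, Pi.mul_apply] using this

lemma n2_tensor {K G : ℝ × ℝ → ℝ≥0∞} (hK : Measurable K) (hG : Measurable G) :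
    n2 (fun p : (ℝ × ℝ) × (ℝ × ℝ) => K p.2 * G (p.1 - p.2)) = n2 K * n2 G := by
  have h : ∫⁻ p : (ℝ × ℝ) × (ℝ × ℝ), (K p.2 * G (p.1 - p.2)) ^ 2 = (∫⁻ z, K z ^ 2) * ∫⁻ z, G z ^ 2 := by
    rw [Measure.volume_eq_prod, lintegral_prod_symm]
    · simp only [mul_pow]
      have : ∀ y : ℝ × ℝ, ∫⁻ x : ℝ × ℝ, K y ^ 2 * G (x - y) ^ 2 = K y ^ 2 * ∫⁻ z, G z ^ 2 := by
        intro y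
        rw [lintegral_const_mul]
        · rw [lintegral_sub_right_eq_self (fun z => G z ^ 2) y]
        · fun_prop
      simp only [this]
      rw [lintegral_mul_const]
      fun_prop
    · fun_prop
  unfold n2
  rw [h, ENNReal.mul_rpow_of_nonneg _ _ (by norm_num)]

lemma n2_tensor' {K G : ℝ × ℝ → ℝ≥0∞} (hK : Measurable K) (hG : Measurable G) :
    n2 (fun p : (ℝ × ℝ) × (ℝ × ℝ) => K p.1 * G (p.1 - p.2)) = n2 K * n2 G := by
  have h : ∫⁻ p : (ℝ × ℝ) × (ℝ × ℝ), (K p.1 * G (p.1 - p.2)) ^ 2 = (∫⁻ z, K z ^ 2) * ∫⁻ z, G z ^ 2 := by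
    rw [Measure.volume_eq_prod, lintegral_prod]
    · simp only [mul_pow]
      have : ∀ y : ℝ × ℝ, ∫⁻ x : ℝ × ℝ, K y ^ 2 * G (y - x) ^ 2 = K y ^ 2 * ∫⁻ z, G z ^ 2 := by
        intro y
        rw [lintegral_const_mul]
        · rw [lintegral_sub_left_eq_self (fun z => G z ^ 2) y]
        · fun_prop
      simp only [this]
      rw [lintegral_mul_const]
      fun_prop
    · fun_prop
  unfold n2
  rw [h, ENNReal.mul_rpow_of_nonneg _ _ (by norm_num)]

lemma tri_A {W : (ℝ × ℝ) × (ℝ × ℝ) → ℝ≥0∞} {K F G : ℝ × ℝ → ℝ≥0∞} (hW : Measurable W)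
    (hK : Measurable K) (hF : Measurable F) (hG : Measurable G) {C : ℝ≥0∞}
    (hC : ∀ z, ∫⁻ w, W (z, w) ^ 2 ≤ C ^ 2) :
    ∫⁻ p, W p * K p.1 * F p.2 * G (p.1 - p.2) ≤ C * (n2 K * (n2 F * n2 G)) := by
  have h1 := cs_n2 (F := fun p : (ℝ × ℝ) × (ℝ × ℝ) => W p * K p.1)
    (G := fun p : (ℝ × ℝ) × (ℝ × ℝ) => F p.2 * G (p.1 - p.2)) (by fun_prop) (by fun_prop)
  rw [n2_tensor hF hG] at h1
  have h2 : n2 (fun p : (ℝ × ℝ) × (ℝ × ℝ) => W p * K p.1) ≤ C * n2 K := by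
    apply le_of_sq_le_sq_enn
    rw [mul_pow, n2_sq, n2_sq, Measure.volume_eq_prod, lintegral_prod _ (by fun_prop),
      ← lintegral_const_mul _ (by fun_prop)]
    apply lintegral_mono
    intro z
    simp only [mul_pow]
    rw [lintegral_mul_const _ (by fun_prop)]
    gcongr
    exact hC z
  calc _ = ∫⁻ p : (ℝ × ℝ) × (ℝ × ℝ), (W p * K p.1) * (F p.2 * G (p.1 - p.2)) := by
        congr 1; ext p; ring
    _ ≤ _ := h1
    _ ≤ (C * n2 K) * (n2 F * n2 G) := by gcongr
    _ = _ := by ring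

lemma tri_B {W : (ℝ × ℝ) × (ℝ × ℝ) → ℝ≥0∞} {K F G : ℝ × ℝ → ℝ≥0∞} (hW : Measurable W)
    (hK : Measurable K) (hF : Measurable F) (hG : Measurable G) {C : ℝ≥0∞}
    (hC : ∀ w, ∫⁻ z, W (z, w) ^ 2 ≤ C ^ 2) :
    ∫⁻ p, W p * K p.1 * F p.2 * G (p.1 - p.2) ≤ C * (n2 K * (n2 F * n2 G)) := by
  have h1 := cs_n2 (F := fun p : (ℝ × ℝ) × (ℝ × ℝ) => W p * F p.2)
    (G := fun p : (ℝ × ℝ) × (ℝ × ℝ) => K p.1 * G (p.1 - p.2)) (by fun_prop) (by fun_prop)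
  rw [n2_tensor' hK hG] at h1
  have h2 : n2 (fun p : (ℝ × ℝ) × (ℝ × ℝ) => W p * F p.2) ≤ C * n2 F := by
    apply le_of_sq_le_sq_enn
    rw [mul_pow, n2_sq, n2_sq, Measure.volume_eq_prod, lintegral_prod_symm _ (by fun_prop),
      ← lintegral_const_mul _ (by fun_prop)]
    apply lintegral_mono
    intro z
    simp only [mul_pow]
    rw [lintegral_mul_const _ (by fun_prop)]
    gcongr
    exact hC z
  calc _ = ∫⁻ p : (ℝ × ℝ) × (ℝ × ℝ), (W p * F p.2) * (K p.1 * G (p.1 - p.2)) := by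
        congr 1; ext p; ring
    _ ≤ _ := h1
    _ ≤ (C * n2 F) * (n2 K * n2 G) := by gcongr
    _ = _ := by ring

lemma tri_B' {W : (ℝ × ℝ) × (ℝ × ℝ) → ℝ≥0∞} {K F G : ℝ × ℝ → ℝ≥0∞} (hW : Measurable W)
    (hK : Measurable K) (hF : Measurable F) (hG : Measurable G) {C : ℝ≥0∞}
    (hC : ∀ w, ∫⁻ z, W (z, w) ^ 2 ≤ C ^ 2) :
    ∫⁻ p : (ℝ × ℝ) × (ℝ × ℝ), W (p.1, p.1 - p.2) * K p.1 * F p.2 * G (p.1 - p.2) ≤ C * (n2 K * (n2 F * n2 G)) := by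
  have h := tri_B hW hK hG hF hC
  rw [mul_comm (n2 G)] at h
  refine le_trans (le_of_eq ?_) h
  rw [Measure.volume_eq_prod, lintegral_prod _ (by fun_prop), lintegral_prod _ (by fun_prop)]
  apply lintegral_congr
  intro z
  rw [← lintegral_sub_left_eq_self _ z]
  apply lintegral_congr
  intro w
  simp only [sub_sub_cancel]
  ring

lemma duality {u : ℝ × ℝ → ℝ≥0∞} (hu : Measurable u) {C : ℝ≥0∞}
    (h : ∀ K : ℝ × ℝ → ℝ≥0∞, Measurable K → ∫⁻ z, K z * u z ≤ C * n2 K) : n2 u ≤ C := by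
  let S := spanningSets (volume : Measure (ℝ × ℝ))
  let K : ℕ → ℝ × ℝ → ℝ≥0∞ := fun n => (S n).indicator (fun z => min (u z) n)
  have hS : ∀ n, MeasurableSet (S n) := measurableSet_spanningSets _
  have hK : ∀ n, Measurable (K n) := fun n => (by fun_prop : Measurable fun z => min (u z) (n:ℝ≥0∞)).indicator (hS n)
  have hKu : ∀ n z, K n z ≤ u z := by
    intro n z
    by_cases hz : z ∈ S n <;> simp [K, hz]
  have hfin : ∀ n, n2 (K n) ≠ ⊤ := by
    intro n
    have : n2 (K n) ^ 2 < ⊤ := by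
      rw [n2_sq]
      calc ∫⁻ z, K n z ^ 2 ≤ ∫⁻ z, (S n).indicator (fun _ => (n : ℝ≥0∞) ^ 2) z := by
            apply lintegral_mono
            intro z
            by_cases hz : z ∈ S n
            · simp only [K, hz, indicator_of_mem]
              gcongr
              exact min_le_right _ _
            · simp [K, hz]
        _ = (n : ℝ≥0∞) ^ 2 * volume (S n) := by
            rw [lintegral_indicator (hS n)]; simp
        _ < ⊤ := ENNReal.mul_lt_top (by simp) (measure_spanningSets_lt_top _ n)
    intro h'
    rw [h'] at this
    simp at this
  have hle : ∀ n, n2 (K n) ≤ C := by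
    intro n
    have h1 : n2 (K n) ^ 2 ≤ C * n2 (K n) := by
      rw [n2_sq]
      refine le_trans (lintegral_mono fun z => ?_) (h (K n) (hK n))
      simp only [sq]
      gcongr
      exact hKu n z
    by_cases h0 : n2 (K n) = 0
    · simp [h0]
    · rw [sq] at h1
      exact (ENNReal.mul_le_mul_iff_left h0 (hfin n)).mp h1
  have hmono : Monotone K := by
    intro m n hmn z
    by_cases hz : z ∈ S m
    · have hz' : z ∈ S n := monotone_spanningSets _ hmn hz
      simp only [K, hz, hz', indicator_of_mem]
      gcongr
    · simp [K, hz]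
  have hsup : ∀ z, ⨆ n, K n z ^ 2 = u z ^ 2 := by
    intro z
    apply le_antisymm
    · exact iSup_le fun n => by gcongr; exact hKu n z
    · obtain ⟨N, hN⟩ : ∃ N, z ∈ S N := by
        have : z ∈ ⋃ n, S n := by rw [iUnion_spanningSets]; trivial
        simpa using this
      have ht : Tendsto (fun n : ℕ => (min (u z) (n:ℝ≥0∞)) ^ 2) atTop (nhds (u z ^ 2)) := by
        have h1 : Tendsto (fun n : ℕ => min (u z) (n:ℝ≥0∞)) atTop (nhds (min (u z) ⊤)) :=
          tendsto_const_nhds.min ENNReal.tendsto_nat_nhds_top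
        rw [min_top_right] at h1
        exact ENNReal.Tendsto.pow h1
      refine le_of_tendsto ht ?_
      filter_upwards [eventually_ge_atTop N] with n hn
      have hz' : z ∈ S n := monotone_spanningSets _ hn hN
      refine le_trans (le_of_eq ?_) (le_iSup (fun n => K n z ^ 2) n)
      simp [K, hz']
  apply le_of_sq_le_sq_enn
  rw [n2_sq, ← lintegral_congr hsup, lintegral_iSup (fun n => (hK n).pow_const 2)]
  · refine iSup_le fun n => ?_
    rw [← n2_sq]
    gcongr
    exact hle n
  · intro m n hmn z
    simp only
    gcongr
    exact hmono hmn z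

lemma bilinear_abstract {WA WB M : (ℝ × ℝ) × (ℝ × ℝ) → ℝ≥0∞} {u F G : ℝ × ℝ → ℝ≥0∞}
    (hWA : Measurable WA) (hWB : Measurable WB) (hM : Measurable M)
    (hu : Measurable u) (hF : Measurable F) (hG : Measurable G) {C D : ℝ≥0∞}
    (hA : ∀ z, ∫⁻ w, WA (z, w) ^ 2 ≤ C ^ 2)
    (hB : ∀ w, ∫⁻ z, WB (z, w) ^ 2 ≤ C ^ 2)
    (hMW : ∀ p, M p ≤ D * (WA p + WB p + WB (p.1, p.1 - p.2)))
    (hle : ∀ z, u z ≤ ∫⁻ w, M (z, w) * F w * G (z - w)) :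
    n2 u ≤ D * (3 * C) * (n2 F * n2 G) := by
  apply duality hu
  intro K hK
  calc ∫⁻ z, K z * u z ≤ ∫⁻ z, K z * ∫⁻ w, M (z, w) * F w * G (z - w) := by
        apply lintegral_mono; intro z; simp only; gcongr; exact hle z
    _ = ∫⁻ p : (ℝ × ℝ) × (ℝ × ℝ), M p * K p.1 * F p.2 * G (p.1 - p.2) := by
        rw [Measure.volume_eq_prod (ℝ × ℝ) (ℝ × ℝ), lintegral_prod _ (by fun_prop)]
        apply lintegral_congr
        intro z
        rw [← lintegral_const_mul _ (by fun_prop)]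
        apply lintegral_congr
        intro w
        ring
    _ ≤ ∫⁻ p : (ℝ × ℝ) × (ℝ × ℝ), D * (WA p * K p.1 * F p.2 * G (p.1 - p.2) +
          WB p * K p.1 * F p.2 * G (p.1 - p.2) +
          WB (p.1, p.1 - p.2) * K p.1 * F p.2 * G (p.1 - p.2)) := by
        apply lintegral_mono; intro p
        calc M p * K p.1 * F p.2 * G (p.1 - p.2)
            ≤ (D * (WA p + WB p + WB (p.1, p.1 - p.2))) * K p.1 * F p.2 * G (p.1 - p.2) := by
              gcongr; exact hMW p
          _ = _ := by ring
    _ = D * ((∫⁻ p : (ℝ × ℝ) × (ℝ × ℝ), WA p * K p.1 * F p.2 * G (p.1 - p.2)) +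
          (∫⁻ p : (ℝ × ℝ) × (ℝ × ℝ), WB p * K p.1 * F p.2 * G (p.1 - p.2)) +
          ∫⁻ p : (ℝ × ℝ) × (ℝ × ℝ), WB (p.1, p.1 - p.2) * K p.1 * F p.2 * G (p.1 - p.2)) := by
        rw [lintegral_const_mul _ (by fun_prop), lintegral_add_left (by fun_prop),
          lintegral_add_left (by fun_prop)]
    _ ≤ D * (C * (n2 K * (n2 F * n2 G)) + C * (n2 K * (n2 F * n2 G)) + C * (n2 K * (n2 F * n2 G))) := by
        gcongr
        · exact tri_A hWA hK hF hG hA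
        · exact tri_B hWB hK hF hG hB
        · exact tri_B' hWB hK hF hG hB
    _ = _ := by ring

/-- Japanese bracket to the power `-β`. -/
noncomputable def jb (β x : ℝ) : ℝ := (1 + |x|) ^ (-β)

lemma jb_pos (β x : ℝ) : 0 < jb β x := by unfold jb; positivity

lemma jb_neg (β x : ℝ) : jb β (-x) = jb β x := by unfold jb; rw [abs_neg]

lemma jb_le_one {β : ℝ} (hβ : 0 ≤ β) (x : ℝ) : jb β x ≤ 1 := by
  unfold jb
  exact Real.rpow_le_one_of_one_le_of_nonpos (by linarith [abs_nonneg x]) (by linarith)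

@[fun_prop]
lemma jb_meas (β : ℝ) : Measurable (jb β) := by unfold jb; fun_prop

/-- The integral of the Japanese bracket. -/
noncomputable def JI (β : ℝ) : ℝ≥0∞ := ∫⁻ x : ℝ, ENNReal.ofReal (jb β x)

lemma JI_lt_top {β : ℝ} (hβ : 1 < β) : JI β < ⊤ := by
  have h := integrable_one_add_norm (E := ℝ) (μ := volume) (r := β) (by simpa using hβ)
  exact h.lintegral_lt_top

lemma L1_piece {β : ℝ} {φ φ' : ℝ → ℝ} (hφ : ∀ x, HasDerivAt φ (φ' x) x) {S : Set ℝ}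
    (hS : MeasurableSet S) (hconv : Convex ℝ S)
    (hsign : (∀ x ∈ S, 0 ≤ φ' x) ∨ (∀ x ∈ S, φ' x ≤ 0)) :
    ∫⁻ x in S, ENNReal.ofReal (|φ' x| * jb β (φ x)) ≤ JI β := by
  have hcont : ContinuousOn φ S := fun x _ => (hφ x).continuousAt.continuousWithinAt
  have hdiff : DifferentiableOn ℝ φ (interior S) := fun x _ =>
    (hφ x).differentiableAt.differentiableWithinAt
  rcases hsign with h | h
  · have hm : MonotoneOn φ S := monotoneOn_of_deriv_nonneg hconv hcont hdiff (fun x hx => by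
      rw [(hφ x).deriv]; exact h x (interior_subset hx))
    have := lintegral_image_eq_lintegral_deriv_mul_of_monotoneOn hS
      (fun x _ => (hφ x).hasDerivWithinAt) hm (fun y => ENNReal.ofReal (jb β y))
    calc _ = ∫⁻ x in S, ENNReal.ofReal (φ' x) * ENNReal.ofReal (jb β (φ x)) := by
          apply setLIntegral_congr_fun hS
          intro x hx
          simp only
          rw [abs_of_nonneg (h x hx), ENNReal.ofReal_mul (h x hx)]
      _ = _ := this.symm
      _ ≤ _ := setLIntegral_le_lintegral _ _
  · have hm : AntitoneOn φ S := antitoneOn_of_deriv_nonpos hconv hcont hdiff (fun x hx => by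
      rw [(hφ x).deriv]; exact h x (interior_subset hx))
    have := lintegral_image_eq_lintegral_deriv_mul_of_antitoneOn hS
      (fun x _ => (hφ x).hasDerivWithinAt) hm (fun y => ENNReal.ofReal (jb β y))
    calc _ = ∫⁻ x in S, ENNReal.ofReal (-φ' x) * ENNReal.ofReal (jb β (φ x)) := by
          apply setLIntegral_congr_fun hS
          intro x hx
          simp only
          rw [abs_of_nonpos (h x hx), ENNReal.ofReal_mul (by linarith [h x hx])]
      _ = _ := this.symm
      _ ≤ _ := setLIntegral_le_lintegral _ _

lemma affine_sets (m n : ℝ) : (MeasurableSet {x : ℝ | 0 ≤ m * x + n} ∧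
    MeasurableSet {x : ℝ | m * x + n < 0}) ∧ (Convex ℝ {x : ℝ | 0 ≤ m * x + n} ∧
    Convex ℝ {x : ℝ | m * x + n < 0}) := by
  refine ⟨⟨measurableSet_le (by fun_prop) (by fun_prop),
    measurableSet_lt (by fun_prop) (by fun_prop)⟩, ?_, ?_⟩
  · intro x hx y hy a b ha hb hab
    simp only [mem_ofPred_eq, smul_eq_mul] at *
    have : m * (a * x + b * y) + n = a * (m * x + n) + b * (m * y + n) := by
      linear_combination (-n) * hab
    rw [this]; positivity
  · intro x hx y hy a b ha hb hab
    simp only [mem_ofPred_eq, smul_eq_mul] at *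
    have : m * (a * x + b * y) + n = a * (m * x + n) + b * (m * y + n) := by
      linear_combination (-n) * hab
    rw [this]
    rcases eq_or_lt_of_le ha with h | h
    · have hb1 : b = 1 := by linarith
      subst hb1; rw [← h]; linarith
    · nlinarith [mul_pos h (neg_pos.mpr hx), mul_nonneg hb (neg_pos.mpr hy).le]

lemma L1_prod {β : ℝ} {φ : ℝ → ℝ} {A m n m' n' : ℝ}
    (hφ : ∀ x, HasDerivAt φ (A * ((m * x + n) * (m' * x + n'))) x) :
    ∫⁻ x, ENNReal.ofReal (|A * ((m * x + n) * (m' * x + n'))| * jb β (φ x)) ≤ 4 * JI β := by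
  obtain ⟨⟨a1, a2⟩, a3, a4⟩ := affine_sets m n
  obtain ⟨⟨b1, b2⟩, b3, b4⟩ := affine_sets m' n'
  set f := fun x => ENNReal.ofReal (|A * ((m * x + n) * (m' * x + n'))| * jb β (φ x))
  set P := {x : ℝ | 0 ≤ m * x + n}
  set N := {x : ℝ | m * x + n < 0}
  set P' := {x : ℝ | 0 ≤ m' * x + n'}
  set N' := {x : ℝ | m' * x + n' < 0}
  have hcov : (univ : Set ℝ) = (P ∩ P' ∪ P ∩ N') ∪ (N ∩ P' ∪ N ∩ N') := by
    ext x
    simp only [P, N, P', N', mem_univ, mem_union, mem_inter_iff, mem_ofPred_eq, true_iff]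
    rcases le_or_gt 0 (m * x + n) with h | h <;> rcases le_or_gt 0 (m' * x + n') with h' | h' <;> simp [h, h']
  have key : ∀ x, (0 ≤ A * ((m * x + n) * (m' * x + n')) ↔ 0 ≤ A * ((m * x + n) * (m' * x + n'))) := fun _ => Iff.rfl
  have h1 : ∫⁻ x in P ∩ P', f x ≤ JI β := by
    apply L1_piece hφ (a1.inter b1) (a3.inter b3)
    rcases le_total 0 A with h | h
    · left; rintro x ⟨hx, hy⟩; exact mul_nonneg h (mul_nonneg hx hy)
    · right; rintro x ⟨hx, hy⟩; exact mul_nonpos_of_nonpos_of_nonneg h (mul_nonneg hx hy)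
  have h2 : ∫⁻ x in P ∩ N', f x ≤ JI β := by
    apply L1_piece hφ (a1.inter b2) (a3.inter b4)
    rcases le_total 0 A with h | h
    · right; rintro x ⟨hx, hy⟩; exact mul_nonpos_of_nonneg_of_nonpos h (mul_nonpos_of_nonneg_of_nonpos hx (le_of_lt hy))
    · left; rintro x ⟨hx, hy⟩; exact mul_nonneg_of_nonpos_of_nonpos h (mul_nonpos_of_nonneg_of_nonpos hx (le_of_lt hy))
  have h3 : ∫⁻ x in N ∩ P', f x ≤ JI β := by
    apply L1_piece hφ (a2.inter b1) (a4.inter b3)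
    rcases le_total 0 A with h | h
    · right; rintro x ⟨hx, hy⟩; exact mul_nonpos_of_nonneg_of_nonpos h (mul_nonpos_of_nonpos_of_nonneg (le_of_lt hx) hy)
    · left; rintro x ⟨hx, hy⟩; exact mul_nonneg_of_nonpos_of_nonpos h (mul_nonpos_of_nonpos_of_nonneg (le_of_lt hx) hy)
  have h4 : ∫⁻ x in N ∩ N', f x ≤ JI β := by
    apply L1_piece hφ (a2.inter b2) (a4.inter b4)
    rcases le_total 0 A with h | h
    · left; rintro x ⟨hx, hy⟩; exact mul_nonneg h (mul_nonneg_of_nonpos_of_nonpos (le_of_lt hx) (le_of_lt hy))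
    · right; rintro x ⟨hx, hy⟩; exact mul_nonpos_of_nonpos_of_nonneg h (mul_nonneg_of_nonpos_of_nonpos (le_of_lt hx) (le_of_lt hy))
  calc ∫⁻ x, f x = ∫⁻ x in (P ∩ P' ∪ P ∩ N') ∪ (N ∩ P' ∪ N ∩ N'), f x := by
        rw [← hcov, Measure.restrict_univ]
    _ ≤ ((∫⁻ x in P ∩ P', f x) + ∫⁻ x in P ∩ N', f x) +
        ((∫⁻ x in N ∩ P', f x) + ∫⁻ x in N ∩ N', f x) :=
        (lintegral_union_le _ _ _).trans (add_le_add (lintegral_union_le _ _ _) (lintegral_union_le _ _ _))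
    _ ≤ (JI β + JI β) + (JI β + JI β) := by gcongr
    _ = _ := by ring

lemma jb_conv_pt {β : ℝ} (hβ : 0 ≤ β) (x y : ℝ) :
    jb β x * jb β y ≤ 2 ^ β * jb β (x - y) * (jb β x + jb β y) := by
  have key : ∀ x y : ℝ, |x| ≤ |y| → jb β y ≤ 2 ^ β * jb β (x - y) := by
    intro x y h
    unfold jb
    have h1 : (1 + |x - y|) ≤ 2 * (1 + |y|) := by
      have := abs_sub x y
      linarith
    have h2 : (1 + |x - y|) ^ β ≤ (2 * (1 + |y|)) ^ β :=
      Real.rpow_le_rpow (by positivity) h1 hβ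
    rw [Real.mul_rpow (by norm_num) (by positivity)] at h2
    rw [Real.rpow_neg (by positivity), Real.rpow_neg (by positivity)]
    have p1 : 0 < (1 + |x - y|) ^ β := by positivity
    have p2 : 0 < (1 + |y|) ^ β := by positivity
    rw [← div_eq_mul_inv, le_div_iff₀ p1, inv_mul_le_iff₀ p2]
    linarith
  have px := jb_pos β x
  have py := jb_pos β y
  have pxy : 0 < 2 ^ β * jb β (x - y) := mul_pos (by positivity) (jb_pos _ _)
  rcases le_total |x| |y| with h | h
  · have := key x y h
    nlinarith [mul_le_mul_of_nonneg_left this px.le, mul_pos pxy py]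
  · have := key y x h
    have e : jb β (x - y) = jb β (y - x) := by rw [← jb_neg, neg_sub]
    rw [← e] at this
    nlinarith [mul_le_mul_of_nonneg_left this py.le, mul_pos pxy px]

lemma jb_conv {β : ℝ} (hβ : 0 ≤ β) (p q : ℝ) :
    ∫⁻ t, ENNReal.ofReal (jb β (t - p) * jb β (t - q)) ≤
      ENNReal.ofReal (2 ^ β) * (2 * JI β) * ENNReal.ofReal (jb β (p - q)) := by
  have e : jb β (p - q) = jb β (q - p) := by rw [← jb_neg, neg_sub]
  calc _ ≤ ∫⁻ t, ENNReal.ofReal (2 ^ β * jb β (p - q)) *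
          (ENNReal.ofReal (jb β (t - p)) + ENNReal.ofReal (jb β (t - q))) := by
        apply lintegral_mono
        intro t
        simp only
        rw [← ENNReal.ofReal_add (jb_pos _ _).le (jb_pos _ _).le,
          ← ENNReal.ofReal_mul (mul_nonneg (by positivity) (jb_pos _ _).le)]
        apply ENNReal.ofReal_le_ofReal
        have := jb_conv_pt hβ (t - p) (t - q)
        rwa [show t - p - (t - q) = q - p by ring, ← e] at this
    _ = ENNReal.ofReal (2 ^ β * jb β (p - q)) * (JI β + JI β) := by
        rw [lintegral_const_mul _ (by fun_prop), lintegral_add_left (by fun_prop)]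
        rw [lintegral_sub_right_eq_self (fun t => ENNReal.ofReal (jb β t)),
          lintegral_sub_right_eq_self (fun t => ENNReal.ofReal (jb β t))]
        rfl
    _ = _ := by
        rw [ENNReal.ofReal_mul (by positivity)]; ring

lemma int_two {β : ℝ} (hβ : 0 ≤ β) {A p q : ℝ → ℝ} (hA : Measurable A) (hA0 : ∀ x, 0 ≤ A x)
    (hp : Measurable p) (hq : Measurable q) :
    ∫⁻ w : ℝ × ℝ, ENNReal.ofReal (A w.2 * (jb β (w.1 - p w.2) * jb β (w.1 - q w.2))) ≤
      ENNReal.ofReal (2 ^ β) * (2 * JI β) * ∫⁻ x, ENNReal.ofReal (A x * jb β (p x - q x)) := by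
  rw [Measure.volume_eq_prod, lintegral_prod_symm _ (by fun_prop),
    ← lintegral_const_mul _ (by fun_prop)]
  apply lintegral_mono
  intro x
  simp only
  calc _ = ENNReal.ofReal (A x) * ∫⁻ t, ENNReal.ofReal (jb β (t - p x) * jb β (t - q x)) := by
        rw [← lintegral_const_mul _ (by fun_prop)]
        apply lintegral_congr; intro t
        rw [ENNReal.ofReal_mul (hA0 x)]
    _ ≤ _ := by
        rw [ENNReal.ofReal_mul (hA0 x)]
        calc _ ≤ ENNReal.ofReal (A x) * (ENNReal.ofReal (2 ^ β) * (2 * JI β) * ENNReal.ofReal (jb β (p x - q x))) := by gcongr; exact jb_conv hβ _ _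
          _ = _ := by ring

/-- A bump of height `√|l|` and width `1/√|l|`. -/
noncomputable def bump (l x : ℝ) : ℝ := if |x| * √|l| ≤ 1 then √|l| else 0

lemma bump_nonneg (l x : ℝ) : 0 ≤ bump l x := by unfold bump; split_ifs <;> positivity

@[fun_prop]
lemma bump_meas : Measurable (fun p : ℝ × ℝ => bump p.1 p.2) := by
  unfold bump
  exact Measurable.ite (measurableSet_le (by fun_prop) (by fun_prop)) (by fun_prop) (by fun_prop)

lemma bump_int (l c : ℝ) : ∫⁻ x, ENNReal.ofReal (bump l (x - c)) ≤ 2 := by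
  rcases eq_or_ne l 0 with h | h
  · subst h; simp [bump]
  have hl : 0 < √|l| := Real.sqrt_pos.mpr (abs_pos.mpr h)
  calc _ = ∫⁻ x, (Icc (c - 1 / √|l|) (c + 1 / √|l|)).indicator (fun _ => ENNReal.ofReal √|l|) x := by
        apply lintegral_congr; intro x
        unfold bump
        have : |x - c| * √|l| ≤ 1 ↔ x ∈ Icc (c - 1 / √|l|) (c + 1 / √|l|) := by
          rw [← le_div_iff₀ hl, abs_le, mem_Icc]
          constructor <;> rintro ⟨h1, h2⟩ <;> constructor <;> linarith
        by_cases hx : |x - c| * √|l| ≤ 1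
        · rw [if_pos hx, indicator_of_mem (this.mp hx)]
        · rw [if_neg hx, indicator_of_notMem (fun h' => hx (this.mpr h'))]; simp
    _ = 2 := by
        rw [lintegral_indicator measurableSet_Icc]
        simp only [lintegral_const, MeasurableSet.univ, Measure.restrict_apply, univ_inter,
          Real.volume_Icc]
        rw [← ENNReal.ofReal_mul hl.le]
        have : √|l| * (c + 1 / √|l| - (c - 1 / √|l|)) = 2 := by field_simp; ring
        rw [this]; simp
    _ ≤ 2 := le_rfl

/-- Indicator of `[-4,4]`. -/
noncomputable def ind4 (x : ℝ) : ℝ := if |x| ≤ 4 then 1 else 0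

lemma ind4_nonneg (x : ℝ) : 0 ≤ ind4 x := by unfold ind4; split_ifs <;> norm_num

@[fun_prop]
lemma ind4_meas : Measurable ind4 := by
  unfold ind4
  exact Measurable.ite (measurableSet_le (by fun_prop) (by fun_prop)) (by fun_prop) (by fun_prop)

lemma ind4_int : ∫⁻ x, ENNReal.ofReal (ind4 x) ≤ 8 := by
  calc _ = ∫⁻ x, (Icc (-4) (4:ℝ)).indicator (fun _ => 1) x := by
        apply lintegral_congr; intro x
        unfold ind4
        by_cases hx : |x| ≤ 4
        · rw [if_pos hx, indicator_of_mem (mem_Icc.mpr (abs_le.mp hx))]; simp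
        · rw [if_neg hx, indicator_of_notMem (fun h' => hx (abs_le.mpr (mem_Icc.mp h')))]; simp
    _ = 8 := by
        rw [lintegral_indicator measurableSet_Icc]
        simp
        norm_num
    _ ≤ 8 := le_rfl

/-- Weight of type A. -/
noncomputable def wA (a β : ℝ) (p : (ℝ × ℝ) × (ℝ × ℝ)) : ℝ :=
  (ind4 p.2.2 + |p.1.2 * (2 * p.2.2 - p.1.2)| + bump p.1.2 (p.2.2 - p.1.2 / 2)) *
    (jb β (p.2.1 - a * p.2.2 ^ 3) * jb β (p.1.1 - p.2.1 - a * (p.1.2 - p.2.2) ^ 3))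

/-- Weight of type B. -/
noncomputable def wB (a₁ a₂ k l β : ℝ) (p : (ℝ × ℝ) × (ℝ × ℝ)) : ℝ :=
  (|a₁ * p.1.2 ^ 2 - a₂ * (p.1.2 - p.2.2) ^ 2| + bump p.2.2 (p.1.2 - k * p.2.2)
      + bump p.2.2 (p.1.2 - l * p.2.2)) *
    (jb β (p.1.1 - a₁ * p.1.2 ^ 3) * jb β (p.1.1 - p.2.1 - a₂ * (p.1.2 - p.2.2) ^ 3))

@[fun_prop]
lemma wA_meas (a β : ℝ) : Measurable (wA a β) := by
  unfold wA
  have h : Measurable fun p : (ℝ × ℝ) × (ℝ × ℝ) => bump p.1.2 (p.2.2 - p.1.2 / 2) :=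
    bump_meas.comp (by fun_prop : Measurable fun p : (ℝ × ℝ) × (ℝ × ℝ) => (p.1.2, p.2.2 - p.1.2 / 2))
  fun_prop

@[fun_prop]
lemma wB_meas (a₁ a₂ k l β : ℝ) : Measurable (wB a₁ a₂ k l β) := by
  unfold wB
  have h : ∀ c : ℝ, Measurable fun p : (ℝ × ℝ) × (ℝ × ℝ) => bump p.2.2 (p.1.2 - c * p.2.2) := fun c =>
    bump_meas.comp (by fun_prop : Measurable fun p : (ℝ × ℝ) × (ℝ × ℝ) => (p.2.2, p.1.2 - c * p.2.2))
  have h1 := h k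
  have h2 := h l
  fun_prop

lemma wA_nonneg (a β : ℝ) (p) : 0 ≤ wA a β p := by
  unfold wA
  have := ind4_nonneg p.2.2
  have := bump_nonneg p.1.2 (p.2.2 - p.1.2 / 2)
  have := (jb_pos β (p.2.1 - a * p.2.2 ^ 3)).le
  have := (jb_pos β (p.1.1 - p.2.1 - a * (p.1.2 - p.2.2) ^ 3)).le
  positivity

lemma wB_nonneg (a₁ a₂ k l β : ℝ) (p) : 0 ≤ wB a₁ a₂ k l β p := by
  unfold wB
  have := bump_nonneg p.2.2 (p.1.2 - k * p.2.2)
  have := bump_nonneg p.2.2 (p.1.2 - l * p.2.2)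
  have := (jb_pos β (p.1.1 - a₁ * p.1.2 ^ 3)).le
  have := (jb_pos β (p.1.1 - p.2.1 - a₂ * (p.1.2 - p.2.2) ^ 3)).le
  positivity

lemma bump_int_jb {β : ℝ} (hβ : 0 ≤ β) (l c : ℝ) (φ : ℝ → ℝ) :
    ∫⁻ x, ENNReal.ofReal (bump l (x - c) * jb β (φ x)) ≤ 2 := by
  refine le_trans (lintegral_mono fun x => ?_) (bump_int l c)
  apply ENNReal.ofReal_le_ofReal
  exact mul_le_of_le_one_right (bump_nonneg _ _) (jb_le_one hβ _)

lemma supA {a β : ℝ} (ha : a ≠ 0) (hβ : 1 < β) :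
    ∃ C : ℝ≥0∞, C ≠ ⊤ ∧ ∀ z, ∫⁻ w, ENNReal.ofReal (wA a β (z, w)) ≤ C := by
  have hβ0 : 0 ≤ β := by linarith
  have hJ := (JI_lt_top hβ).ne
  refine ⟨ENNReal.ofReal (2 ^ β) * (2 * JI β) * (8 + ENNReal.ofReal (|3 * a|⁻¹) * (4 * JI β) + 2), ?_, ?_⟩
  · finiteness
  rintro ⟨τ, ξ⟩
  have hb : Measurable fun x => bump ξ (x - ξ / 2) :=
    bump_meas.comp (by fun_prop : Measurable fun x : ℝ => (ξ, x - ξ / 2))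
  have h1 := int_two hβ0 (A := fun x => ind4 x + |ξ * (2 * x - ξ)| + bump ξ (x - ξ / 2))
    (p := fun x => a * x ^ 3) (q := fun x => τ - a * (ξ - x) ^ 3) (by fun_prop)
    (fun x => by have := ind4_nonneg x; have := bump_nonneg ξ (x - ξ / 2); positivity)
    (by fun_prop) (by fun_prop)
  refine le_trans (le_of_eq ?_) (h1.trans ?_)
  · apply lintegral_congr
    rintro ⟨t, x⟩
    unfold wA
    simp only
    rw [← jb_neg β (τ - t - a * (ξ - x) ^ 3)]
    congr 4
    ring
  · gcongr
    set φ : ℝ → ℝ := fun x => a * x ^ 3 - (τ - a * (ξ - x) ^ 3) with hφdef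
    have hφ : ∀ x, HasDerivAt φ ((3 * a) * ((0 * x + ξ) * (2 * x + -ξ))) x := by
      intro x
      have e1 : HasDerivAt (fun x : ℝ => a * x ^ 3) (a * (3 * x ^ 2)) x := by
        simpa using (hasDerivAt_pow 3 x).const_mul a
      have e2 : HasDerivAt (fun x : ℝ => (ξ - x) ^ 3) (3 * (ξ - x) ^ 2 * (-1)) x := by
        simpa using ((hasDerivAt_id x).const_sub ξ).fun_pow 3
      have := e1.sub ((e2.const_mul a).const_sub τ)
      convert! this using 1
      ring
    have h3 := L1_prod (β := β) hφ
    calc _ ≤ ∫⁻ x, (ENNReal.ofReal (ind4 x) + ENNReal.ofReal (|3 * a|⁻¹) * ENNReal.ofReal (|(3 * a) * ((0 * x + ξ) * (2 * x + -ξ))| * jb β (φ x)) + ENNReal.ofReal (bump ξ (x - ξ / 2) * jb β (φ x))) := by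
          apply lintegral_mono
          intro x
          simp only
          have j0 := jb_pos β (φ x)
          have j1 := jb_le_one hβ0 (φ x)
          have i0 := ind4_nonneg x
          have b0 := bump_nonneg ξ (x - ξ / 2)
          rw [← ENNReal.ofReal_mul (by positivity), ← ENNReal.ofReal_add (by positivity) (by positivity), ← ENNReal.ofReal_add (by positivity) (by positivity)]
          apply ENNReal.ofReal_le_ofReal
          have e : |3 * a|⁻¹ * (|(3 * a) * ((0 * x + ξ) * (2 * x + -ξ))| * jb β (φ x)) = |ξ * (2 * x - ξ)| * jb β (φ x) := by
            rw [abs_mul (3 * a)]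
            have : |3 * a| ≠ 0 := by simp [ha]
            field_simp
            ring_nf
          rw [e]
          have : ind4 x * jb β (φ x) ≤ ind4 x := mul_le_of_le_one_right i0 j1
          have e3 : (ind4 x + |ξ * (2 * x - ξ)| + bump ξ (x - ξ / 2)) * jb β (φ x) ≤ ind4 x + |ξ * (2 * x - ξ)| * jb β (φ x) + bump ξ (x - ξ / 2) * jb β (φ x) := by
            linarith
          exact e3
      _ ≤ _ := by
          have m1 : Measurable φ := by fun_prop
          rw [lintegral_add_left (by fun_prop), lintegral_add_left (by fun_prop), lintegral_const_mul _ (by fun_prop)]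
          gcongr
          · exact ind4_int
          · exact bump_int_jb hβ0 _ _ _

/-- The B-type phase has bounded weighted integral. -/
lemma supB {a₁ a₂ k l β : ℝ} (hβ : 1 < β)
    (hr : (0 ≤ a₁ ∧ a₂ ≤ 0) ∨ (a₁ ≤ 0 ∧ 0 ≤ a₂) ∨ ∃ r : ℝ, a₂ = a₁ * r ^ 2) :
    ∃ C : ℝ≥0∞, C ≠ ⊤ ∧ ∀ w, ∫⁻ z, ENNReal.ofReal (wB a₁ a₂ k l β (z, w)) ≤ C := by
  have hβ0 : 0 ≤ β := by linarith
  have hJ := (JI_lt_top hβ).ne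
  refine ⟨ENNReal.ofReal (2 ^ β) * (2 * JI β) * (4 * JI β + 2 + 2), ?_, ?_⟩
  · finiteness
  rintro ⟨t, y⟩
  have hb : ∀ c, Measurable fun x => bump y (x - c) := fun c =>
    bump_meas.comp (by fun_prop : Measurable fun x : ℝ => (y, x - c))
  have hb1 := hb (k * y)
  have hb2 := hb (l * y)
  have h1 := int_two hβ0 (A := fun x => |a₁ * x ^ 2 - a₂ * (x - y) ^ 2| + bump y (x - k * y) + bump y (x - l * y))
    (p := fun x => a₁ * x ^ 3) (q := fun x => t + a₂ * (x - y) ^ 3) (by fun_prop)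
    (fun x => by have := bump_nonneg y (x - k * y); have := bump_nonneg y (x - l * y); positivity)
    (by fun_prop) (by fun_prop)
  refine le_trans (le_of_eq ?_) (h1.trans ?_)
  · apply lintegral_congr
    rintro ⟨τ, x⟩
    unfold wB
    simp only
    congr 4
    ring
  · gcongr
    set φ : ℝ → ℝ := fun x => a₁ * x ^ 3 - (t + a₂ * (x - y) ^ 3) with hφdef
    have hφ : ∀ x, HasDerivAt φ (3 * (a₁ * x ^ 2 - a₂ * (x - y) ^ 2)) x := by
      intro x
      have e1 : HasDerivAt (fun x : ℝ => a₁ * x ^ 3) (a₁ * (3 * x ^ 2)) x := by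
        simpa using (hasDerivAt_pow 3 x).const_mul a₁
      have e2 : HasDerivAt (fun x : ℝ => (x - y) ^ 3) (3 * (x - y) ^ 2 * 1) x := by
        simpa using ((hasDerivAt_id x).sub_const y).fun_pow 3
      have := e1.sub ((e2.const_mul a₂).const_add t)
      convert! this using 1
      ring
    have h3 : ∫⁻ x, ENNReal.ofReal (|3 * (a₁ * x ^ 2 - a₂ * (x - y) ^ 2)| * jb β (φ x)) ≤ 4 * JI β := by
      have hone : JI β ≤ 4 * JI β := le_mul_of_one_le_left (by positivity) (by norm_num)
      rcases hr with h | h | ⟨r, h⟩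
      · have := L1_piece (β := β) hφ MeasurableSet.univ convex_univ (Or.inl fun x _ => by
          have := mul_nonneg h.1 (sq_nonneg x)
          have := mul_nonneg (neg_nonneg.mpr h.2) (sq_nonneg (x - y))
          nlinarith)
        rw [Measure.restrict_univ] at this
        exact this.trans hone
      · have := L1_piece (β := β) hφ MeasurableSet.univ convex_univ (Or.inr fun x _ => by
          have := mul_nonneg h.2 (sq_nonneg (x - y))
          have := mul_nonneg (neg_nonneg.mpr h.1) (sq_nonneg x)
          nlinarith)
        rw [Measure.restrict_univ] at this
        exact this.trans hone
      · have e : ∀ x, 3 * (a₁ * x ^ 2 - a₂ * (x - y) ^ 2) = (3 * a₁) * (((1 - r) * x + r * y) * ((1 + r) * x + -(r * y))) := by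
          intro x; rw [h]; ring
        simp only [e] at hφ ⊢
        exact L1_prod hφ
    calc _ ≤ ∫⁻ x, (ENNReal.ofReal (|3 * (a₁ * x ^ 2 - a₂ * (x - y) ^ 2)| * jb β (φ x)) + ENNReal.ofReal (bump y (x - k * y) * jb β (φ x)) + ENNReal.ofReal (bump y (x - l * y) * jb β (φ x))) := by
          apply lintegral_mono
          intro x
          simp only
          have j0 := jb_pos β (φ x)
          have b0 := bump_nonneg y (x - k * y)
          have b1 := bump_nonneg y (x - l * y)
          rw [← ENNReal.ofReal_add (by positivity) (by positivity), ← ENNReal.ofReal_add (by positivity) (by positivity)]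
          apply ENNReal.ofReal_le_ofReal
          rw [abs_mul, abs_of_pos (by norm_num : (0:ℝ) < 3)]
          have : 0 ≤ |a₁ * x ^ 2 - a₂ * (x - y) ^ 2| * jb β (φ x) := by positivity
          have e3 : (|a₁ * x ^ 2 - a₂ * (x - y) ^ 2| + bump y (x - k * y) + bump y (x - l * y)) * jb β (φ x) ≤ 3 * |a₁ * x ^ 2 - a₂ * (x - y) ^ 2| * jb β (φ x) + bump y (x - k * y) * jb β (φ x) + bump y (x - l * y) * jb β (φ x) := by
            linarith
          exact e3
      _ ≤ _ := by
          have m1 : Measurable φ := by fun_prop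
          rw [lintegral_add_left (by fun_prop), lintegral_add_left (by fun_prop)]
          gcongr
          · exact bump_int_jb hβ0 _ _ _
          · exact bump_int_jb hβ0 _ _ _


/-! ### Pointwise multiplier bounds -/

/-- The multiplier. -/
noncomputable def Qm (ρ x y : ℝ) : ℝ :=
  (x + y) ^ 2 * (1 + |x + y|) ^ (-(2 * ρ)) * (1 + |x|) ^ (2 * ρ) * (1 + |y|) ^ (2 * ρ)

lemma Qm_nonneg (ρ x y : ℝ) : 0 ≤ Qm ρ x y := by unfold Qm; positivity

lemma Qm_symm (ρ x y : ℝ) : Qm ρ x y = Qm ρ y x := by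
  unfold Qm; rw [add_comm y x]; ring

lemma rpow_two_le {ρ t c : ℝ} (hρ0 : 0 ≤ ρ) (hρ : ρ ≤ 1) (ht : 0 ≤ t) (htc : t ≤ c) (hc : 1 ≤ c) :
    t ^ (2 * ρ) ≤ c ^ 2 := by
  calc t ^ (2 * ρ) ≤ c ^ (2 * ρ) := Real.rpow_le_rpow ht htc (by linarith)
    _ ≤ c ^ (2 : ℝ) := Real.rpow_le_rpow_of_exponent_le hc (by linarith)
    _ = c ^ 2 := by norm_cast

lemma Qm_small {ρ x y : ℝ} (hρ0 : 0 ≤ ρ) (hρ : ρ ≤ 1) (hx : |x| ≤ 1) (hy : |y| ≤ 4) :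
    Qm ρ x y ≤ 2500 := by
  unfold Qm
  have h1 : (1 + |x|) ^ (2 * ρ) ≤ 2 ^ 2 := rpow_two_le hρ0 hρ (by positivity) (by linarith) (by norm_num)
  have h2 : (1 + |y|) ^ (2 * ρ) ≤ 5 ^ 2 := rpow_two_le hρ0 hρ (by positivity) (by linarith) (by norm_num)
  have h3 : (1 + |x + y|) ^ (-(2 * ρ)) ≤ 1 :=
    Real.rpow_le_one_of_one_le_of_nonpos (by linarith [abs_nonneg (x + y)]) (by linarith)
  have h4 : (x + y) ^ 2 ≤ 25 := by
    rw [abs_le] at hx hy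
    nlinarith
  calc _ ≤ 25 * 1 * 2 ^ 2 * (5:ℝ) ^ 2 := by gcongr
    _ = _ := by norm_num

lemma Qm_big {ρ x y : ℝ} (hρ0 : 0 ≤ ρ) (hρ : ρ ≤ 1) (hx : |x| ≤ 1) (hy : 4 ≤ |y|) :
    Qm ρ x y ≤ 32 * |(x + y) * (x - y)| := by
  unfold Qm
  have e1 : |y| ≤ |x + y| + |x| := by
    have := abs_sub (x + y) x
    rwa [show x + y - x = y by ring] at this
  have e2 : |y| ≤ |x - y| + |x| := by
    have := abs_sub x (x - y)
    rw [show x - (x - y) = y by ring] at this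
    linarith
  have e3 := abs_add_le x y
  have h1 : (1 + |x|) ^ (2 * ρ) ≤ 2 ^ 2 := rpow_two_le hρ0 hρ (by positivity) (by linarith) (by norm_num)
  have h2 : (1 + |y|) ^ (2 * ρ) ≤ 2 ^ 2 * (1 + |x + y|) ^ (2 * ρ) := by
    calc _ ≤ (2 * (1 + |x + y|)) ^ (2 * ρ) :=
          Real.rpow_le_rpow (by positivity) (by linarith) (by linarith)
      _ = 2 ^ (2 * ρ) * (1 + |x + y|) ^ (2 * ρ) := Real.mul_rpow (by norm_num) (by positivity)
      _ ≤ _ := by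
          gcongr
          exact rpow_two_le hρ0 hρ (by norm_num) le_rfl (by norm_num)
  have hp : 0 < 1 + |x + y| := by positivity
  have h3 : (1 + |x + y|) ^ (-(2 * ρ)) * (1 + |x + y|) ^ (2 * ρ) = 1 := by
    rw [← Real.rpow_add hp]; simp
  calc _ ≤ (x + y) ^ 2 * (1 + |x + y|) ^ (-(2 * ρ)) * 2 ^ 2 * (2 ^ 2 * (1 + |x + y|) ^ (2 * ρ)) := by gcongr
    _ = 16 * (x + y) ^ 2 * ((1 + |x + y|) ^ (-(2 * ρ)) * (1 + |x + y|) ^ (2 * ρ)) := by ring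
    _ = 16 * (|x + y| * |x + y|) := by rw [h3, abs_mul_abs_self]; ring
    _ ≤ 16 * (|x + y| * (2 * |x - y|)) := by
        gcongr; linarith
    _ = _ := by rw [abs_mul]; ring

lemma Qm_R0 {ρ x y : ℝ} (hρ0 : 0 ≤ ρ) (hρ : ρ ≤ 1) (h : |x| ≤ 1 ∨ |y| ≤ 1) :
    Qm ρ x y ≤ 2500 * (ind4 x + |(x + y) * (x - y)|) := by
  have h0 := abs_nonneg ((x + y) * (x - y))
  have hi := ind4_nonneg x
  rcases h with h | h
  · rcases le_total |y| 4 with h' | h'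
    · have : ind4 x = 1 := by unfold ind4; rw [if_pos (by linarith)]
      have := Qm_small hρ0 hρ h h'
      linarith
    · have := Qm_big hρ0 hρ h h'
      linarith
  · rcases le_total |x| 4 with h' | h'
    · have : ind4 x = 1 := by unfold ind4; rw [if_pos h']
      have := Qm_small hρ0 hρ h h'
      rw [Qm_symm] at this
      linarith
    · have := Qm_big hρ0 hρ h h'
      rw [Qm_symm, show (y + x) * (y - x) = -((x + y) * (x - y)) by ring, abs_neg] at this
      linarith

/-- The reduced multiplier. -/
noncomputable def Pm (ρ α x y : ℝ) : ℝ :=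
  |x + y| ^ (2 - α) * (1 + |x + y|) ^ (-(2 * ρ)) * |x * y| ^ (2 * ρ - α)

lemma Pm_nonneg (ρ α x y : ℝ) : 0 ≤ Pm ρ α x y := by unfold Pm; positivity

lemma Pm_symm (ρ α x y : ℝ) : Pm ρ α x y = Pm ρ α y x := by
  unfold Pm; rw [add_comm y x, mul_comm y x]

lemma Qm_H {ρ α x y c H : ℝ} (hρ0 : 0 ≤ ρ) (hρ : ρ ≤ 1) (hα : 0 ≤ α) (hc : 0 < c)
    (hx : 1 ≤ |x|) (hy : 1 ≤ |y|) (hH : c * |(x + y) * x * y| ≤ |H|) :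
    Qm ρ x y * jb α H ≤ 16 * c ^ (-α) * Pm ρ α x y := by
  have hP := Pm_nonneg ρ α x y
  rcases eq_or_ne (x + y) 0 with h0 | h0
  · have : Qm ρ x y = 0 := by unfold Qm; rw [h0]; simp
    rw [this, zero_mul]; positivity
  have hz : 0 < |x + y| := abs_pos.mpr h0
  have hx0 : 0 < |x| := by linarith
  have hy0 : 0 < |y| := by linarith
  have hxy : 0 < |x * y| := by rw [abs_mul]; positivity
  have h1 : ∀ t : ℝ, 1 ≤ t → (1 + t) ^ (2 * ρ) ≤ 2 ^ 2 * t ^ (2 * ρ) := by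
    intro t ht
    calc _ ≤ (2 * t) ^ (2 * ρ) := Real.rpow_le_rpow (by linarith) (by linarith) (by linarith)
      _ = 2 ^ (2 * ρ) * t ^ (2 * ρ) := Real.mul_rpow (by norm_num) (by linarith)
      _ ≤ _ := by
          gcongr
          exact rpow_two_le hρ0 hρ (by norm_num) le_rfl (by norm_num)
  have hj : jb α H ≤ c ^ (-α) * |x + y| ^ (-α) * |x * y| ^ (-α) := by
    unfold jb
    calc _ ≤ (c * (|x + y| * |x * y|)) ^ (-α) := by
          apply Real.rpow_le_rpow_of_nonpos (by positivity) _ (by linarith)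
          rw [mul_assoc, abs_mul] at hH
          linarith
      _ = _ := by rw [Real.mul_rpow hc.le (by positivity), Real.mul_rpow (by positivity) (by positivity)]; ring
  have e1 : |x + y| ^ (2 - α) = (x + y) ^ 2 * |x + y| ^ (-α) := by
    rw [sub_eq_add_neg, Real.rpow_add hz]
    congr 1
    rw [← sq_abs (x + y)]; norm_cast
  have e2 : |x * y| ^ (2 * ρ - α) = |x| ^ (2 * ρ) * |y| ^ (2 * ρ) * |x * y| ^ (-α) := by
    rw [sub_eq_add_neg, Real.rpow_add hxy, abs_mul, Real.mul_rpow hx0.le hy0.le]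
  unfold Qm Pm
  calc _ ≤ (x + y) ^ 2 * (1 + |x + y|) ^ (-(2 * ρ)) * (2 ^ 2 * |x| ^ (2 * ρ)) * (2 ^ 2 * |y| ^ (2 * ρ))
        * (c ^ (-α) * |x + y| ^ (-α) * |x * y| ^ (-α)) := by
        have := h1 |x| hx
        have := h1 |y| hy
        have := (jb_pos α H).le
        gcongr
    _ = _ := by rw [e1, e2]; ring

lemma sqrt_bump {l v B c : ℝ} (hc : 0 < c) (hB : c * (|l| * |v|) ≤ B) :
    √|l| ≤ c⁻¹ * B + bump l v := by
  have hB0 : 0 ≤ c⁻¹ * B := by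
    have : 0 ≤ B := le_trans (by positivity) hB
    positivity
  by_cases h : |v| * √|l| ≤ 1
  · unfold bump; rw [if_pos h]; linarith
  · unfold bump; rw [if_neg h]
    push Not at h
    have h1 : √|l| * √|l| = |l| := Real.mul_self_sqrt (abs_nonneg l)
    have h2 : |l| * |v| ≤ c⁻¹ * B := by
      rw [← div_eq_inv_mul, le_div_iff₀ hc]; linarith
    have h3 : 0 ≤ √|l| := Real.sqrt_nonneg _
    nlinarith

lemma Pm_R1 {ρ α x y : ℝ} (hρ0 : 5/8 ≤ ρ) (hα0 : 0 ≤ α) (hα : α ≤ 1)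
    (c1 : 2 - α ≤ 2 * ρ) (c2 : 4 * ρ - 2 * α ≤ 1) (c3 : 2 + 2 * ρ - 3 * α ≤ 1/2)
    (hx : 1 ≤ |x|) (hy : 1 ≤ |y|) :
    Pm ρ α x y ≤ 8 * (|(x + y) * (x - y)| + bump (x + y) ((x - y) / 2)) := by
  have hb := bump_nonneg (x + y) ((x - y) / 2)
  have hxz : 2 * |x| ≤ |x + y| + |x - y| := by
    have := abs_add_le (x + y) (x - y)
    rwa [show x + y + (x - y) = 2 * x by ring, abs_mul, abs_two] at this
  have hxy : |x * y| ≤ (|x + y| ^ 2 + |x - y| ^ 2) / 4 := by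
    rw [sq_abs, sq_abs, abs_le]
    constructor <;> nlinarith
  have hP : Pm ρ α x y = |x + y| ^ (2 - α) * (1 + |x + y|) ^ (-(2 * ρ)) * |x * y| ^ (2 * ρ - α) := rfl
  have hz0 : 0 ≤ |x + y| := abs_nonneg _
  have hv0 : 0 ≤ |x - y| := abs_nonneg _
  rw [abs_mul]
  have hbb := sqrt_bump (l := x + y) (v := (x - y) / 2) (c := 2) (B := |x + y| * |x - y|) (by norm_num)
    (by rw [abs_div, abs_two]; apply le_of_eq; ring)
  set z := |x + y| with hz
  set v := |x - y| with hv
  rcases le_total (2 * z) v with h | h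
  · have hv1 : 1 ≤ v := by linarith
    have h1 : |x * y| ≤ v ^ 2 := by nlinarith
    have h2 : |x * y| ^ (2 * ρ - α) ≤ v := by
      calc _ ≤ (v ^ 2) ^ (2 * ρ - α) := Real.rpow_le_rpow (abs_nonneg _) h1 (by linarith)
        _ = v ^ (4 * ρ - 2 * α) := by
            rw [← Real.rpow_natCast, ← Real.rpow_mul hv0]; congr 1; push_cast; ring
        _ ≤ v ^ (1:ℝ) := Real.rpow_le_rpow_of_exponent_le hv1 c2
        _ = v := Real.rpow_one v
    have h3 : z ^ (2 - α) * (1 + z) ^ (-(2 * ρ)) ≤ z := by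
      calc _ = z * (z ^ (1 - α) * (1 + z) ^ (-(2 * ρ))) := by
            rw [show 2 - α = 1 + (1 - α) by ring, Real.rpow_one_add' hz0 (by linarith)]; ring
        _ ≤ z * ((1 + z) ^ (1 - α) * (1 + z) ^ (-(2 * ρ))) := by
            gcongr
            linarith
        _ = z * (1 + z) ^ (1 - α - 2 * ρ) := by
            rw [← Real.rpow_add (by linarith)]; congr 2
        _ ≤ z * 1 := by
            gcongr
            exact Real.rpow_le_one_of_one_le_of_nonpos (by linarith) (by linarith)
        _ = z := mul_one z
    calc Pm ρ α x y ≤ z * v := by rw [hP]; gcongr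
      _ ≤ _ := by nlinarith [mul_nonneg hz0 hv0]
  · have hz1 : 2 / 3 ≤ z := by linarith
    have hzp : 0 < z := by linarith
    have h1 : |x * y| ≤ 2 * z ^ 2 := by nlinarith
    have h2 : |x * y| ^ (2 * ρ - α) ≤ 2 * z ^ (4 * ρ - 2 * α) := by
      calc _ ≤ (2 * z ^ 2) ^ (2 * ρ - α) := Real.rpow_le_rpow (abs_nonneg _) h1 (by linarith)
        _ = 2 ^ (2 * ρ - α) * z ^ (4 * ρ - 2 * α) := by
            rw [Real.mul_rpow (by norm_num) (by positivity), ← Real.rpow_natCast, ← Real.rpow_mul hz0]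
            congr 2; push_cast; ring
        _ ≤ 2 ^ (1:ℝ) * z ^ (4 * ρ - 2 * α) := by
            gcongr
            · norm_num
            · linarith
        _ = _ := by rw [Real.rpow_one]
    have h3 : (1 + z) ^ (-(2 * ρ)) ≤ z ^ (-(2 * ρ)) :=
      Real.rpow_le_rpow_of_nonpos hzp (by linarith) (by linarith)
    have h4 : z ^ (2 + 2 * ρ - 3 * α) ≤ 2 * √z := by
      calc _ ≤ (3 / 2 * z) ^ (2 + 2 * ρ - 3 * α) :=
            Real.rpow_le_rpow hz0 (by linarith) (by linarith)
        _ ≤ (3 / 2 * z) ^ (1 / 2 : ℝ) :=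
            Real.rpow_le_rpow_of_exponent_le (by linarith) c3
        _ = √(3 / 2 * z) := by rw [Real.sqrt_eq_rpow]
        _ ≤ √(2 ^ 2 * z) := Real.sqrt_le_sqrt (by nlinarith)
        _ = 2 * √z := by
            rw [Real.sqrt_mul (by norm_num), Real.sqrt_sq (by norm_num)]
    have h5 : √|z| = √z := by rw [abs_of_nonneg hz0]
    calc Pm ρ α x y ≤ z ^ (2 - α) * z ^ (-(2 * ρ)) * (2 * z ^ (4 * ρ - 2 * α)) := by rw [hP]; gcongr
      _ = 2 * z ^ (2 + 2 * ρ - 3 * α) := by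
          rw [show 2 + 2 * ρ - 3 * α = (2 - α) + (-(2 * ρ)) + (4 * ρ - 2 * α) by ring,
            Real.rpow_add hzp, Real.rpow_add hzp]; ring
      _ ≤ 4 * √z := by linarith
      _ ≤ _ := by
          nlinarith [mul_nonneg hz0 hv0]

lemma Pm_R2a {ρ α x y : ℝ} (hρ0 : 5/8 ≤ ρ) (hα0 : 0 ≤ α) (hα : α ≤ 1)
    (c1 : 2 - α ≤ 2 * ρ) (c2 : 4 * ρ - 2 * α ≤ 1)
    (hx : 1 ≤ |x|) (hy : 1 ≤ |y|) :
    Pm ρ α x y ≤ |x * y| := by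
  unfold Pm
  have hxy : 1 ≤ |x * y| := by rw [abs_mul]; nlinarith
  have hz : 0 ≤ |x + y| := abs_nonneg _
  have h1 : |x + y| ^ (2 - α) * (1 + |x + y|) ^ (-(2 * ρ)) ≤ 1 := by
    calc _ ≤ (1 + |x + y|) ^ (2 - α) * (1 + |x + y|) ^ (-(2 * ρ)) := by
          gcongr
          · linarith
          · linarith
      _ = (1 + |x + y|) ^ (2 - α - 2 * ρ) := by
            rw [← Real.rpow_add (by linarith)]; congr 1
      _ ≤ 1 := Real.rpow_le_one_of_one_le_of_nonpos (by linarith) (by linarith)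
  calc _ ≤ 1 * |x * y| ^ (1:ℝ) := by
        gcongr
        linarith
    _ = _ := by simp

lemma Pm_R2b {ρ α x y : ℝ} (hρ0 : 5/8 ≤ ρ) (hρ1 : ρ ≤ 3/4) (hα0 : 0 ≤ α) (hα : α ≤ 1)
    (c1 : 2 - α ≤ 2 * ρ) (c2 : 4 * ρ - 2 * α ≤ 1) (c3 : 2 + 2 * ρ - 3 * α ≤ 1/2)
    (hx : 1 ≤ |x|) (h1 : |x| ≤ 3 * |x + y|) (h2 : |y| ≤ 2 * |x|) :
    Pm ρ α x y ≤ 6 * √|x| := by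
  unfold Pm
  have hx0 : 0 < |x| := by linarith
  set z := |x + y|
  have hz : 0 < z := by linarith
  have hxy : |x * y| ≤ 2 * |x| ^ 2 := by rw [abs_mul]; nlinarith
  have h3 : (1 + z) ^ (-(2 * ρ)) ≤ z ^ (-(2 * ρ)) :=
    Real.rpow_le_rpow_of_nonpos hz (by linarith) (by linarith)
  have h4 : |x * y| ^ (2 * ρ - α) ≤ 2 * |x| ^ (4 * ρ - 2 * α) := by
    calc _ ≤ (2 * |x| ^ 2) ^ (2 * ρ - α) := Real.rpow_le_rpow (abs_nonneg _) hxy (by linarith)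
      _ = 2 ^ (2 * ρ - α) * |x| ^ (4 * ρ - 2 * α) := by
          rw [Real.mul_rpow (by norm_num) (by positivity), ← Real.rpow_natCast, ← Real.rpow_mul hx0.le]
          congr 2; push_cast; ring
      _ ≤ 2 ^ (1:ℝ) * |x| ^ (4 * ρ - 2 * α) := by
          gcongr
          · norm_num
          · linarith
      _ = _ := by rw [Real.rpow_one]
  have h5 : z ^ (2 - α - 2 * ρ) ≤ 3 * |x| ^ (2 - α - 2 * ρ) := by
    calc _ ≤ (3⁻¹ * |x|) ^ (2 - α - 2 * ρ) :=
          Real.rpow_le_rpow_of_nonpos (by positivity) (by linarith) (by linarith)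
      _ = 3 ^ (2 * ρ + α - 2) * |x| ^ (2 - α - 2 * ρ) := by
          rw [Real.mul_rpow (by norm_num) hx0.le, Real.inv_rpow (by norm_num),
            ← Real.rpow_neg (by norm_num)]
          congr 2; ring
      _ ≤ 3 ^ (1:ℝ) * |x| ^ (2 - α - 2 * ρ) := by
          gcongr
          · norm_num
          · linarith
      _ = _ := by rw [Real.rpow_one]
  calc _ ≤ z ^ (2 - α) * z ^ (-(2 * ρ)) * (2 * |x| ^ (4 * ρ - 2 * α)) := by gcongr
    _ = z ^ (2 - α - 2 * ρ) * (2 * |x| ^ (4 * ρ - 2 * α)) := by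
        rw [← Real.rpow_add hz]; congr 2
    _ ≤ 3 * |x| ^ (2 - α - 2 * ρ) * (2 * |x| ^ (4 * ρ - 2 * α)) := by gcongr
    _ = 6 * |x| ^ (2 + 2 * ρ - 3 * α) := by
        rw [show 2 + 2 * ρ - 3 * α = (2 - α - 2 * ρ) + (4 * ρ - 2 * α) by ring,
            Real.rpow_add hx0]; ring
    _ ≤ 6 * |x| ^ (1 / 2 : ℝ) := by
        gcongr
    _ = _ := by rw [Real.sqrt_eq_rpow]

/-- geometric dichotomy -/
def GD (a₁ a₂ c k l : ℝ) : Prop := ∀ x y : ℝ,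
  c * |x * y| ≤ |a₁ * (x + y) ^ 2 - a₂ * y ^ 2| ∨
  (|x| ≤ 3 * |x + y| ∧ |y| ≤ 2 * |x| ∧
    (c * (|x| * |x + y - k * x|) ≤ |a₁ * (x + y) ^ 2 - a₂ * y ^ 2| ∨
     c * (|x| * |x + y - l * x|) ≤ |a₁ * (x + y) ^ 2 - a₂ * y ^ 2|))

lemma Pm_R2 {ρ α x y a₁ a₂ c k l : ℝ} (hρ0 : 5/8 ≤ ρ) (hρ1 : ρ ≤ 3/4) (hα0 : 0 ≤ α) (hα : α ≤ 1)
    (c1 : 2 - α ≤ 2 * ρ) (c2 : 4 * ρ - 2 * α ≤ 1) (c3 : 2 + 2 * ρ - 3 * α ≤ 1/2)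
    (hc : 0 < c) (hG : GD a₁ a₂ c k l)
    (hx : 1 ≤ |x|) (hy : 1 ≤ |y|) :
    Pm ρ α x y ≤ 6 * (1 + c⁻¹) * (|a₁ * (x + y) ^ 2 - a₂ * y ^ 2| +
      bump x (x + y - k * x) + bump x (x + y - l * x)) := by
  have hb1 := bump_nonneg x (x + y - k * x)
  have hb2 := bump_nonneg x (x + y - l * x)
  have hB0 := abs_nonneg (a₁ * (x + y) ^ 2 - a₂ * y ^ 2)
  have hci : 0 < c⁻¹ := inv_pos.mpr hc
  have p1 := mul_nonneg hci.le hb1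
  have p2 := mul_nonneg hci.le hb2
  have p3 := mul_nonneg hci.le hB0
  rcases hG x y with h | ⟨h1, h2, h | h⟩
  · have h3 := Pm_R2a hρ0 hα0 hα c1 c2 hx hy
    have h4 : |x * y| ≤ c⁻¹ * |a₁ * (x + y) ^ 2 - a₂ * y ^ 2| := by
      rw [← div_eq_inv_mul, le_div_iff₀ hc]; linarith
    linarith
  · have h3 := Pm_R2b hρ0 hρ1 hα0 hα c1 c2 c3 hx h1 h2
    have h4 := sqrt_bump hc h
    linarith
  · have h3 := Pm_R2b hρ0 hρ1 hα0 hα c1 c2 c3 hx h1 h2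
    have h4 := sqrt_bump hc h
    linarith

lemma abs_same {A B u v : ℝ} (h : 0 < A * B) (hu : 0 ≤ u) (hv : 0 ≤ v) :
    min |A| |B| * (u + v) ≤ |A * u + B * v| := by
  have h1 : min |A| |B| * (u + v) ≤ |A| * u + |B| * v := by
    rw [mul_add]
    gcongr
    · exact min_le_left _ _
    · exact min_le_right _ _
  refine h1.trans (le_of_eq ?_)
  rcases pos_and_pos_or_neg_and_neg_of_mul_pos h with ⟨ha, hb⟩ | ⟨ha, hb⟩
  · rw [abs_of_pos ha, abs_of_pos hb, abs_of_nonneg (by positivity)]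
  · rw [abs_of_neg ha, abs_of_neg hb, abs_of_nonpos]
    · ring
    · nlinarith

lemma H_lower {a₁ a₂ : ℝ} (ha₁ : a₁ ≠ 0) (ha₂ : a₂ ≠ 0)
    (hratio : a₂ / a₁ < 0 ∨ a₂ / a₁ = 1 ∨ 4 < a₂ / a₁) :
    ∃ c : ℝ, 0 < c ∧ ∀ x y : ℝ, c * |(x + y) * x * y| ≤ |a₂ * (x ^ 3 + y ^ 3) - a₁ * (x + y) ^ 3| := by
  have hne : ∀ r, a₂ / a₁ = r → a₂ = a₁ * r := by
    intro r h; rw [← h]; field_simp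
  have key : 0 < (a₂ / 4 - a₁) * (3 * a₂ / 4) → ∃ c : ℝ, 0 < c ∧ ∀ x y : ℝ,
      c * |(x + y) * x * y| ≤ |a₂ * (x ^ 3 + y ^ 3) - a₁ * (x + y) ^ 3| := by
    intro hpos
    have hA : a₂ / 4 - a₁ ≠ 0 := left_ne_zero_of_mul hpos.ne'
    have hB : 3 * a₂ / 4 ≠ 0 := right_ne_zero_of_mul hpos.ne'
    refine ⟨min |a₂ / 4 - a₁| |3 * a₂ / 4|, lt_min (abs_pos.mpr hA) (abs_pos.mpr hB), fun x y => ?_⟩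
    have h1 := abs_same hpos (sq_nonneg (x + y)) (sq_nonneg (x - y))
    rw [show a₂ * (x ^ 3 + y ^ 3) - a₁ * (x + y) ^ 3 =
      (x + y) * ((a₂ / 4 - a₁) * (x + y) ^ 2 + 3 * a₂ / 4 * (x - y) ^ 2) by ring,
      mul_assoc (x + y), abs_mul, abs_mul (x + y)]
    have h2 : |x * y| ≤ (x + y) ^ 2 + (x - y) ^ 2 := by
      rw [abs_le]; constructor <;> nlinarith
    have h0 : 0 ≤ min |a₂ / 4 - a₁| |3 * a₂ / 4| := by positivity
    calc _ = |x + y| * (min |a₂ / 4 - a₁| |3 * a₂ / 4| * |x * y|) := by ring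
      _ ≤ |x + y| * (min |a₂ / 4 - a₁| |3 * a₂ / 4| * ((x + y) ^ 2 + (x - y) ^ 2)) := by gcongr
      _ ≤ _ := by gcongr
  have hsq : 0 < a₁ ^ 2 := by positivity
  have e : (a₂ / 4 - a₁) * (3 * a₂ / 4) = a₁ ^ 2 * ((a₂ / a₁ / 4 - 1) * (3 * (a₂ / a₁) / 4)) := by
    field_simp
  rcases hratio with h | h | h
  · apply key
    rw [e]
    apply mul_pos hsq
    nlinarith
  · have := hne _ h
    rw [mul_one] at this
    subst this
    refine ⟨3 * |a₂|, by positivity, fun x y => ?_⟩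
    rw [show a₂ * (x ^ 3 + y ^ 3) - a₂ * (x + y) ^ 3 = -(3 * a₂ * ((x + y) * x * y)) by ring, abs_neg,
      abs_mul (3 * a₂), abs_mul 3]
    norm_num
  · apply key
    rw [e]
    apply mul_pos hsq
    nlinarith

lemma GD_neg {a₁ a₂ : ℝ} (h : 0 < a₁ * (-a₂)) : ∃ c, 0 < c ∧ GD a₁ a₂ c 0 0 := by
  have hA : a₁ ≠ 0 := left_ne_zero_of_mul h.ne'
  have hB : -a₂ ≠ 0 := right_ne_zero_of_mul h.ne'
  have hm : 0 < min |a₁| |-a₂| := lt_min (abs_pos.mpr hA) (abs_pos.mpr hB)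
  refine ⟨min |a₁| |-a₂| / 2, by positivity, fun x y => Or.inl ?_⟩
  have h1 := abs_same h (sq_nonneg (x + y)) (sq_nonneg y)
  rw [show a₁ * (x + y) ^ 2 - a₂ * y ^ 2 = a₁ * (x + y) ^ 2 + -a₂ * y ^ 2 by ring]
  refine le_trans ?_ h1
  have h2 : |x * y| ≤ 2 * ((x + y) ^ 2 + y ^ 2) := by
    rw [abs_le]; constructor <;> nlinarith [sq_nonneg (x + y + y), sq_nonneg (x + y - y), sq_nonneg y, sq_nonneg (x + y)]
  nlinarith

lemma GD_one {a : ℝ} (h : a ≠ 0) : ∃ c, 0 < c ∧ GD a a c (1/2) (1/2) := by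
  have ha : 0 < |a| := abs_pos.mpr h
  refine ⟨|a| / 2, by positivity, fun x y => ?_⟩
  rw [show a * (x + y) ^ 2 - a * y ^ 2 = a * (x * (x + 2 * y)) by ring, abs_mul a, abs_mul x (x + 2 * y),
    show x + y - 1 / 2 * x = (x + 2 * y) / 2 by ring, abs_div, abs_two, abs_mul x y]
  rcases le_or_gt (|y| / 2) |x + 2 * y| with h1 | h1
  · left
    calc _ = |a| * (|x| * (|y| / 2)) := by ring
      _ ≤ _ := by gcongr
  · right
    refine ⟨?_, ?_, Or.inl ?_⟩
    · rw [abs_lt] at h1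
      rcases le_total 0 y with hy | hy
      · rw [abs_of_nonneg hy] at h1
        rw [abs_of_nonpos (by linarith), abs_of_nonpos (by linarith)]
        linarith
      · rw [abs_of_nonpos hy] at h1
        rw [abs_of_nonneg (by linarith), abs_of_nonneg (by linarith)]
        linarith
    · rw [abs_lt] at h1
      rcases le_total 0 y with hy | hy
      · rw [abs_of_nonneg hy] at h1
        rw [abs_of_nonneg hy, abs_of_nonpos (by linarith)]
        linarith
      · rw [abs_of_nonpos hy] at h1
        rw [abs_of_nonpos hy, abs_of_nonneg (by linarith)]
        linarith
    · have : 0 ≤ |a| * (|x| * |x + 2 * y|) := by positivity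
      nlinarith

lemma GD_big {a κ : ℝ} (h : a ≠ 0) (hκ : 2 < κ) :
    ∃ c, 0 < c ∧ GD a (a * κ ^ 2) c (κ / (κ - 1)) (κ / (κ + 1)) := by
  have ha : 0 < |a| := abs_pos.mpr h
  refine ⟨|a| / 4, by positivity, fun x y => ?_⟩
  have hk1 : κ - 1 ≠ 0 := by linarith
  have hk2 : κ + 1 ≠ 0 := by linarith
  have e1 : |κ * y - (x + y)| = (κ - 1) * |x + y - κ / (κ - 1) * x| := by
    rw [← abs_of_pos (show 0 < κ - 1 by linarith), ← abs_mul, abs_of_pos (show 0 < κ - 1 by linarith)]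
    congr 1; field_simp; ring
  have e2 : |κ * y + (x + y)| = (κ + 1) * |x + y - κ / (κ + 1) * x| := by
    rw [← abs_of_pos (show 0 < κ + 1 by linarith), ← abs_mul, abs_of_pos (show 0 < κ + 1 by linarith)]
    congr 1; field_simp; ring
  rw [show a * (x + y) ^ 2 - a * κ ^ 2 * y ^ 2 = -(a * ((κ * y - (x + y)) * (κ * y + (x + y)))) by ring, abs_neg,
    abs_mul a, abs_mul (κ * y - (x + y)), abs_mul x y]
  have t1 : 2 * |x + y| ≤ |κ * y - (x + y)| + |κ * y + (x + y)| := by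
    have := abs_sub (κ * y + (x + y)) (κ * y - (x + y))
    rw [show κ * y + (x + y) - (κ * y - (x + y)) = 2 * (x + y) by ring, abs_mul, abs_two] at this
    linarith
  have t2 : 2 * κ * |y| ≤ |κ * y - (x + y)| + |κ * y + (x + y)| := by
    have := abs_add_le (κ * y + (x + y)) (κ * y - (x + y))
    rw [show κ * y + (x + y) + (κ * y - (x + y)) = 2 * κ * y by ring, abs_mul, abs_of_pos (show 0 < 2 * κ by linarith)] at this
    linarith
  have t3 : |x| ≤ |x + y| + |y| := by
    have := abs_sub (x + y) y
    rwa [show x + y - y = x by ring] at this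
  have t3' : |x + y| ≤ |x| + |y| := abs_add_le x y
  have t4 : κ * |y| ≤ |κ * y - (x + y)| + |x + y| := by
    have := abs_add_le (κ * y - (x + y)) (x + y)
    rwa [show κ * y - (x + y) + (x + y) = κ * y by ring, abs_mul, abs_of_pos (show 0 < κ by linarith)] at this
  have t5 : κ * |y| ≤ |κ * y + (x + y)| + |x + y| := by
    have := abs_sub (κ * y + (x + y)) (x + y)
    rwa [show κ * y + (x + y) - (x + y) = κ * y by ring, abs_mul, abs_of_pos (show 0 < κ by linarith)] at this
  have hy2 : 2 * |y| ≤ κ * |y| := by gcongr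
  have hy0 := abs_nonneg y
  have hx0 := abs_nonneg x
  have hd1 := abs_nonneg (κ * y - (x + y))
  have hd2 := abs_nonneg (κ * y + (x + y))
  rcases lt_or_ge |κ * y - (x + y)| (|y| / 2) with h1 | h1
  · right
    refine ⟨by linarith, by linarith, Or.inl ?_⟩
    have g1 : |x| / 2 ≤ |κ * y + (x + y)| := by linarith
    have g0 := abs_nonneg (x + y - κ / (κ - 1) * x)
    have g2 : |x + y - κ / (κ - 1) * x| ≤ |κ * y - (x + y)| := by
      rw [e1]; nlinarith
    calc |a| / 4 * (|x| * |x + y - κ / (κ - 1) * x|)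
        ≤ |a| / 2 * (|x| * |x + y - κ / (κ - 1) * x|) := by gcongr; norm_num
      _ = |a| * (|x + y - κ / (κ - 1) * x| * (|x| / 2)) := by ring
      _ ≤ _ := by gcongr
  rcases lt_or_ge |κ * y + (x + y)| (|y| / 2) with h2 | h2
  · right
    refine ⟨by linarith, by linarith, Or.inr ?_⟩
    have g1 : |x| / 2 ≤ |κ * y - (x + y)| := by linarith
    have g0 := abs_nonneg (x + y - κ / (κ + 1) * x)
    have g2 : |x + y - κ / (κ + 1) * x| ≤ |κ * y + (x + y)| := by
      rw [e2]; nlinarith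
    calc |a| / 4 * (|x| * |x + y - κ / (κ + 1) * x|)
        ≤ |a| / 2 * (|x| * |x + y - κ / (κ + 1) * x|) := by gcongr; norm_num
      _ = |a| * ((|x| / 2) * |x + y - κ / (κ + 1) * x|) := by ring
      _ ≤ _ := by gcongr
  · left
    have hm : |x| * |y| / 4 ≤ |κ * y - (x + y)| * |κ * y + (x + y)| := by
      rcases le_total |κ * y - (x + y)| |κ * y + (x + y)| with h3 | h3
      · have : |x| / 2 ≤ |κ * y + (x + y)| := by linarith
        calc _ = |y| / 2 * (|x| / 2) := by ring
          _ ≤ _ := by gcongr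
      · have : |x| / 2 ≤ |κ * y - (x + y)| := by linarith
        calc _ = (|x| / 2) * (|y| / 2) := by ring
          _ ≤ _ := by gcongr
    calc _ = |a| * (|x| * |y| / 4) := by ring
      _ ≤ _ := by gcongr

lemma geom {a₁ a₂ : ℝ} (ha₁ : a₁ ≠ 0)
    (hratio : a₂ / a₁ < 0 ∨ a₂ / a₁ = 1 ∨ 4 < a₂ / a₁) :
    ∃ c k l, 0 < c ∧ GD a₁ a₂ c k l ∧
      ((0 ≤ a₁ ∧ a₂ ≤ 0) ∨ (a₁ ≤ 0 ∧ 0 ≤ a₂) ∨ ∃ r, a₂ = a₁ * r ^ 2) := by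
  have e : a₂ = a₁ * (a₂ / a₁) := by field_simp
  rcases hratio with h | h | h
  · have hp : 0 < a₁ * (-a₂) := by
      have : a₁ * a₂ = a₁ ^ 2 * (a₂ / a₁) := by field_simp
      have h2 : 0 < a₁ ^ 2 := by positivity
      nlinarith
    obtain ⟨c, hc, hG⟩ := GD_neg hp
    refine ⟨c, 0, 0, hc, hG, ?_⟩
    rcases pos_and_pos_or_neg_and_neg_of_mul_pos hp with ⟨h1, h2⟩ | ⟨h1, h2⟩
    · left; constructor <;> linarith
    · right; left; constructor <;> linarith
  · rw [h, mul_one] at e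
    subst e
    obtain ⟨c, hc, hG⟩ := GD_one ha₁
    exact ⟨c, _, _, hc, hG, Or.inr (Or.inr ⟨1, by ring⟩)⟩
  · have hκ : 2 < √(a₂ / a₁) := by
      rw [Real.lt_sqrt (by norm_num)]; linarith
    obtain ⟨c, hc, hG⟩ := GD_big ha₁ hκ
    have e' : a₁ * √(a₂ / a₁) ^ 2 = a₂ := by rw [Real.sq_sqrt (by linarith)]; exact e.symm
    rw [e'] at hG
    exact ⟨c, _, _, hc, hG, Or.inr (Or.inr ⟨_, e'.symm⟩)⟩

lemma jb_le_of_H {α H s : ℝ} (hα : 0 ≤ α) (hα1 : α ≤ 1) (h : |H| ≤ 3 * |s|) : jb α s ≤ 3 * jb α H := by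
  unfold jb
  have h1 : (1 + |H|) ^ α ≤ (3 * (1 + |s|)) ^ α :=
    Real.rpow_le_rpow (by positivity) (by linarith) hα
  rw [Real.mul_rpow (by norm_num) (by positivity)] at h1
  have h2 : (3:ℝ) ^ α ≤ 3 := by
    calc (3:ℝ) ^ α ≤ 3 ^ (1:ℝ) := Real.rpow_le_rpow_of_exponent_le (by norm_num) hα1
      _ = 3 := by simp
  rw [Real.rpow_neg (by positivity), Real.rpow_neg (by positivity)]
  have p1 : 0 < (1 + |H|) ^ α := by positivity
  have p2 : 0 < (1 + |s|) ^ α := by positivity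
  rw [← div_eq_mul_inv, le_div_iff₀ p1, inv_mul_le_iff₀ p2]
  nlinarith

lemma jb_swap {α β s t : ℝ} (h : α ≤ β) (hst : |s| ≤ |t|) : jb α s * jb β t ≤ jb β s * jb α t := by
  have e : ∀ x, jb β x = jb α x * jb (β - α) x := by
    intro x; unfold jb
    rw [← Real.rpow_add (by positivity)]; congr 1; ring
  have h1 : jb (β - α) t ≤ jb (β - α) s := by
    unfold jb
    exact Real.rpow_le_rpow_of_nonpos (by positivity) (by linarith) (by linarith)
  rw [e s, e t]
  have := jb_pos α s
  have := jb_pos α t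
  calc _ = jb α s * jb α t * jb (β - α) t := by ring
    _ ≤ jb α s * jb α t * jb (β - α) s := by gcongr
    _ = _ := by ring

/-- The full squared multiplier. -/
noncomputable def mm (a₁ a₂ ρ α β : ℝ) (p : (ℝ × ℝ) × (ℝ × ℝ)) : ℝ :=
  Qm ρ p.2.2 (p.1.2 - p.2.2) * (jb α (p.1.1 - a₁ * p.1.2 ^ 3) *
    (jb β (p.2.1 - a₂ * p.2.2 ^ 3) * jb β (p.1.1 - p.2.1 - a₂ * (p.1.2 - p.2.2) ^ 3)))

lemma mm_nonneg (a₁ a₂ ρ α β p) : 0 ≤ mm a₁ a₂ ρ α β p := by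
  unfold mm
  have := Qm_nonneg ρ p.2.2 (p.1.2 - p.2.2)
  have := (jb_pos α (p.1.1 - a₁ * p.1.2 ^ 3)).le
  have := (jb_pos β (p.2.1 - a₂ * p.2.2 ^ 3)).le
  have := (jb_pos β (p.1.1 - p.2.1 - a₂ * (p.1.2 - p.2.2) ^ 3)).le
  positivity

lemma pointwise {a₁ a₂ : ℝ} (ha₁ : a₁ ≠ 0) (ha₂ : a₂ ≠ 0)
    (hratio : a₂ / a₁ < 0 ∨ a₂ / a₁ = 1 ∨ 4 < a₂ / a₁)
    {ρ α β c k l : ℝ} (hρ0 : 5/8 ≤ ρ) (hρ1 : ρ ≤ 3/4) (hα0 : 0 ≤ α) (hα : α ≤ 1) (hβ : 1 ≤ β)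
    (c1 : 2 - α ≤ 2 * ρ) (c2 : 4 * ρ - 2 * α ≤ 1) (c3 : 2 + 2 * ρ - 3 * α ≤ 1/2)
    (hc : 0 < c) (hG : GD a₁ a₂ c k l) :
    ∃ D : ℝ, 0 ≤ D ∧ ∀ p, mm a₁ a₂ ρ α β p ≤
      D * (wA a₂ β p + wB a₁ a₂ k l β p + wB a₁ a₂ k l β (p.1, p.1 - p.2)) := by
  obtain ⟨d, hd, hH⟩ := H_lower ha₁ ha₂ hratio
  have hK0 : 0 ≤ 16 * d ^ (-α) := by positivity
  set K := 16 * d ^ (-α) with hK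
  set L := 6 * (1 + c⁻¹) with hL
  have hL0 : 0 ≤ L := by have := inv_pos.mpr hc; positivity
  refine ⟨2500 + 3 * K * 8 + 3 * K * L, by positivity, ?_⟩
  rintro p
  have n1 := wA_nonneg a₂ β p
  have n2 := wB_nonneg a₁ a₂ k l β p
  have n3 := wB_nonneg a₁ a₂ k l β (p.1, p.1 - p.2)
  suffices h : mm a₁ a₂ ρ α β p ≤ 2500 * wA a₂ β p ∨ mm a₁ a₂ ρ α β p ≤ 3 * K * 8 * wA a₂ β p ∨
      mm a₁ a₂ ρ α β p ≤ 3 * K * L * wB a₁ a₂ k l β p ∨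
      mm a₁ a₂ ρ α β p ≤ 3 * K * L * wB a₁ a₂ k l β (p.1, p.1 - p.2) by
    have q1 : 0 ≤ 3 * K * 8 := by positivity
    have q2 : 0 ≤ 3 * K * L := by positivity
    have r1 := mul_nonneg q1 n1
    have r2 := mul_nonneg q1 n2
    have r3 := mul_nonneg q1 n3
    have r4 := mul_nonneg q2 n1
    have r5 := mul_nonneg q2 n2
    have r6 := mul_nonneg q2 n3
    have ex : (2500 + 3 * K * 8 + 3 * K * L) * (wA a₂ β p + wB a₁ a₂ k l β p + wB a₁ a₂ k l β (p.1, p.1 - p.2))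
      = 2500 * wA a₂ β p + 2500 * wB a₁ a₂ k l β p + 2500 * wB a₁ a₂ k l β (p.1, p.1 - p.2) +
       (3 * K * 8 * wA a₂ β p + 3 * K * 8 * wB a₁ a₂ k l β p + 3 * K * 8 * wB a₁ a₂ k l β (p.1, p.1 - p.2)) +
       (3 * K * L * wA a₂ β p + 3 * K * L * wB a₁ a₂ k l β p + 3 * K * L * wB a₁ a₂ k l β (p.1, p.1 - p.2)) := by
      ring
    rw [ex]
    rcases h with h | h | h | h <;> linarith
  clear n1 n2 n3
  obtain ⟨⟨τ, ξ⟩, ⟨t, x⟩⟩ := p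
  obtain ⟨y, rfl⟩ : ∃ y, ξ = x + y := ⟨ξ - x, by ring⟩
  have ey : x + y - x = y := by ring
  have ex : x + y - y = x := by ring
  unfold mm wA wB
  simp only [Prod.mk_sub_mk, ey, ex, sub_sub_cancel]
  have e2 : 2 * x - (x + y) = x - y := by ring
  have e3 : x - (x + y) / 2 = (x - y) / 2 := by ring
  rw [e2, e3]
  have eH : (τ - a₁ * (x + y) ^ 3) - (t - a₂ * x ^ 3) - (τ - t - a₂ * y ^ 3) =
      a₂ * (x ^ 3 + y ^ 3) - a₁ * (x + y) ^ 3 := by ring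
  have hH' := hH x y
  rw [← eH] at hH'
  set s := τ - a₁ * (x + y) ^ 3
  set s1 := t - a₂ * x ^ 3
  set s2 := τ - t - a₂ * y ^ 3
  have hs3 : |s - s1 - s2| ≤ |s| + |s1| + |s2| :=
    (abs_sub _ _).trans (by have := abs_sub s s1; linarith)
  have j0 := jb_pos α s
  have j1 := jb_pos β s1
  have j2 := jb_pos β s2
  have j3 := jb_pos β s
  have jα1 := jb_le_one hα0 s
  have hQ := Qm_nonneg ρ x y
  have hρ' : 0 ≤ ρ := by linarith
  have hρ'' : ρ ≤ 1 := by linarith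
  by_cases hsm : |x| ≤ 1 ∨ |y| ≤ 1
  · left
    have h0 := Qm_R0 hρ' hρ'' hsm
    have hb := bump_nonneg (x + y) ((x - y) / 2)
    calc _ ≤ Qm ρ x y * (1 * (jb β s1 * jb β s2)) := by gcongr
      _ ≤ 2500 * (ind4 x + |(x + y) * (x - y)| + bump (x + y) ((x - y) / 2)) * (1 * (jb β s1 * jb β s2)) := by
          gcongr
          linarith
      _ = _ := by ring
  · push Not at hsm
    obtain ⟨hx, hy⟩ := hsm
    right
    have hQH := Qm_H hρ' hρ'' hα0 hd hx.le hy.le hH'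
    by_cases hm0 : |s1| ≤ |s| ∧ |s2| ≤ |s|
    · left
      have h1 := jb_le_of_H hα0 hα (show |s - s1 - s2| ≤ 3 * |s| by linarith)
      have hP := Pm_R1 hρ0 hα0 hα c1 c2 c3 hx.le hy.le
      have hi := ind4_nonneg x
      calc _ ≤ Qm ρ x y * (3 * jb α (s - s1 - s2) * (jb β s1 * jb β s2)) := by gcongr
        _ = 3 * (Qm ρ x y * jb α (s - s1 - s2)) * (jb β s1 * jb β s2) := by ring
        _ ≤ 3 * (K * (8 * (ind4 x + |(x + y) * (x - y)| + bump (x + y) ((x - y) / 2)))) * (jb β s1 * jb β s2) := by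
            refine mul_le_mul_of_nonneg_right (mul_le_mul_of_nonneg_left (hQH.trans ?_) (by norm_num)) (by positivity)
            exact mul_le_mul_of_nonneg_left (by linarith) hK0
        _ = _ := by ring
    · right
      by_cases hm1 : |s| ≤ |s1| ∧ |s2| ≤ |s1|
      · left
        have h1 := jb_le_of_H hα0 hα (show |s - s1 - s2| ≤ 3 * |s1| by linarith)
        have h2 := jb_swap (show α ≤ β by linarith) hm1.1
        have hP := Pm_R2 hρ0 hρ1 hα0 hα c1 c2 c3 hc hG hx.le hy.le
        calc _ = Qm ρ x y * (jb α s * jb β s1) * jb β s2 := by ring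
          _ ≤ Qm ρ x y * (jb β s * jb α s1) * jb β s2 := by gcongr
          _ ≤ Qm ρ x y * (jb β s * (3 * jb α (s - s1 - s2))) * jb β s2 := by gcongr
          _ = 3 * (Qm ρ x y * jb α (s - s1 - s2)) * (jb β s * jb β s2) := by ring
          _ ≤ 3 * (K * (L * (|a₁ * (x + y) ^ 2 - a₂ * y ^ 2| + bump x (x + y - k * x) + bump x (x + y - l * x)))) * (jb β s * jb β s2) := by
            refine mul_le_mul_of_nonneg_right (mul_le_mul_of_nonneg_left (hQH.trans ?_) (by norm_num)) (by positivity)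
            exact mul_le_mul_of_nonneg_left (by linarith) hK0
          _ = _ := by ring
      · right
        have hm2 : |s| ≤ |s2| ∧ |s1| ≤ |s2| := by
          rcases le_total |s1| |s| with h1 | h1 <;> rcases le_total |s2| |s| with h2 | h2 <;>
            rcases le_total |s1| |s2| with h3 | h3 <;> first
            | exact ⟨by linarith, by linarith⟩
            | exact absurd ⟨by linarith, by linarith⟩ hm0
            | exact absurd ⟨by linarith, by linarith⟩ hm1
        have h1 := jb_le_of_H hα0 hα (show |s - s1 - s2| ≤ 3 * |s2| by linarith)
        have h2 := jb_swap (show α ≤ β by linarith) hm2.1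
        have hP := Pm_R2 hρ0 hρ1 hα0 hα c1 c2 c3 hc hG hy.le hx.le
        rw [Pm_symm, add_comm y x] at hP
        calc _ = Qm ρ x y * (jb α s * jb β s2) * jb β s1 := by ring
          _ ≤ Qm ρ x y * (jb β s * jb α s2) * jb β s1 := by gcongr
          _ ≤ Qm ρ x y * (jb β s * (3 * jb α (s - s1 - s2))) * jb β s1 := by gcongr
          _ = 3 * (Qm ρ x y * jb α (s - s1 - s2)) * (jb β s * jb β s1) := by ring
          _ ≤ 3 * (K * (L * (|a₁ * (x + y) ^ 2 - a₂ * x ^ 2| + bump y (x + y - k * y) + bump y (x + y - l * y)))) * (jb β s * jb β s1) := by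
            refine mul_le_mul_of_nonneg_right (mul_le_mul_of_nonneg_left (hQH.trans ?_) (by norm_num)) (by positivity)
            exact mul_le_mul_of_nonneg_left (by linarith) hK0
          _ = _ := by ring

/-! ### Assembly -/

/-- The Gevrey–Bourgain weight. -/
noncomputable def wt (a σ s b : ℝ) (z : ℝ × ℝ) : ℝ :=
  Real.exp (σ * |z.2|) * (1 + |z.2|) ^ s * (1 + |z.1 - a * z.2 ^ 3|) ^ b

lemma wt_pos (a σ s b : ℝ) (z : ℝ × ℝ) : 0 < wt a σ s b z := by
  unfold wt
  have : 0 < 1 + |z.2| := by positivity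
  have : 0 < 1 + |z.1 - a * z.2 ^ 3| := by positivity
  positivity

@[fun_prop]
lemma wt_meas (a σ s b : ℝ) : Measurable (wt a σ s b) := by
  unfold wt
  fun_prop

lemma XNorm_eq {a σ s b : ℝ} {f : ℝ → ℝ → ℂ} (hf : Continuous (fun z : ℝ × ℝ => FT2 f z.1 z.2)) :
    XNorm a σ s b f = n2 (fun z : ℝ × ℝ => ENNReal.ofReal (wt a σ s b z * ‖FT2 f z.1 z.2‖)) := by
  unfold XNorm n2
  congr 1
  have hm : Measurable fun z : ℝ × ℝ => FT2 f z.1 z.2 := hf.measurable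
  rw [Measure.volume_eq_prod, lintegral_prod _ (by fun_prop)]
  apply lintegral_congr; intro τ
  apply lintegral_congr; intro ξ
  have h0 := (wt_pos a σ s b (τ, ξ)).le
  rw [← ENNReal.ofReal_pow (by positivity)]
  congr 1
  unfold wt
  simp only
  have h1 : 0 ≤ 1 + |ξ| := by positivity
  have h2 : 0 ≤ 1 + |τ - a * ξ ^ 3| := by positivity
  have hsq : ∀ u e : ℝ, 0 ≤ u → u ^ (2 * e) = (u ^ e) ^ 2 := by
    intro u e hu
    rw [mul_comm, Real.rpow_mul hu]; norm_cast
  have he : Real.exp (2 * σ * |ξ|) = Real.exp (σ * |ξ|) ^ 2 := by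
    rw [sq, ← Real.exp_add]; congr 1; ring
  rw [hsq _ _ h1, hsq _ _ h2, he]
  ring

lemma mm_sqrt (a₁ a₂ ρ α b : ℝ) (τ t x y : ℝ) :
    √(mm a₁ a₂ ρ α (2 * b) ((τ, x + y), (t, x))) =
      |x + y| * (1 + |x + y|) ^ (-ρ) * (1 + |x|) ^ ρ * (1 + |y|) ^ ρ *
      ((1 + |τ - a₁ * (x + y) ^ 3|) ^ (-(α / 2)) *
        ((1 + |t - a₂ * x ^ 3|) ^ (-b) * (1 + |τ - t - a₂ * y ^ 3|) ^ (-b))) := by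
  have hsq : ∀ u e : ℝ, 0 ≤ u → u ^ (2 * e) = (u ^ e) ^ 2 := by
    intro u e hu
    rw [mul_comm, Real.rpow_mul hu]; norm_cast
  rw [← Real.sqrt_sq (show 0 ≤ |x + y| * (1 + |x + y|) ^ (-ρ) * (1 + |x|) ^ ρ * (1 + |y|) ^ ρ *
      ((1 + |τ - a₁ * (x + y) ^ 3|) ^ (-(α / 2)) *
        ((1 + |t - a₂ * x ^ 3|) ^ (-b) * (1 + |τ - t - a₂ * y ^ 3|) ^ (-b))) by positivity)]
  congr 1
  unfold mm Qm jb
  simp only [add_sub_cancel_left]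
  rw [show -(2 * ρ) = 2 * (-ρ) by ring, show -α = 2 * (-(α / 2)) by ring, show -(2 * b) = 2 * (-b) by ring,
    hsq _ _ (by positivity), hsq _ _ (by positivity), hsq _ _ (by positivity), hsq _ _ (by positivity),
    hsq _ _ (by positivity), hsq _ _ (by positivity), ← sq_abs (x + y)]
  ring

lemma mult_bound {a₁ a₂ ρ α b b' s σ : ℝ} (hσ : 0 ≤ σ) (hsρ : 0 ≤ s + ρ) (hb' : b' - 1 ≤ -(α / 2))
    (z w : ℝ × ℝ) :
    wt a₁ σ s (b' - 1) z * |z.2| ≤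
      √(mm a₁ a₂ ρ α (2 * b) (z, w)) * wt a₂ σ s b w * wt a₂ σ s b (z - w) := by
  obtain ⟨τ, ξ⟩ := z
  obtain ⟨t, x⟩ := w
  obtain ⟨y, rfl⟩ : ∃ y, ξ = x + y := ⟨ξ - x, by ring⟩
  rw [mm_sqrt]
  unfold wt
  simp only [Prod.mk_sub_mk, add_sub_cancel_left]
  have hcan : ∀ u e : ℝ, 0 < u → u ^ (-e) * u ^ e = 1 := by
    intro u e hu; rw [← Real.rpow_add hu]; simp
  have p1 : 0 < 1 + |x + y| := by positivity
  have p2 : 0 < 1 + |x| := by positivity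
  have p3 : 0 < 1 + |y| := by positivity
  have p4 : 1 ≤ 1 + |τ - a₁ * (x + y) ^ 3| := by linarith [abs_nonneg (τ - a₁ * (x + y) ^ 3)]
  have tri := abs_add_le x y
  have h1 : Real.exp (σ * |x + y|) ≤ Real.exp (σ * |x|) * Real.exp (σ * |y|) := by
    rw [← Real.exp_add, ← mul_add]; gcongr
  have h2 : (1 + |x + y|) ^ (s + ρ) ≤ (1 + |x|) ^ (s + ρ) * (1 + |y|) ^ (s + ρ) := by
    rw [← Real.mul_rpow p2.le p3.le]
    apply Real.rpow_le_rpow p1.le _ hsρ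
    nlinarith [mul_nonneg (abs_nonneg x) (abs_nonneg y)]
  have h3 : (1 + |τ - a₁ * (x + y) ^ 3|) ^ (b' - 1) ≤ (1 + |τ - a₁ * (x + y) ^ 3|) ^ (-(α / 2)) :=
    Real.rpow_le_rpow_of_exponent_le p4 hb'
  have e1 : (1 + |x + y|) ^ s = (1 + |x + y|) ^ (-ρ) * (1 + |x + y|) ^ (s + ρ) := by
    rw [← Real.rpow_add p1]; congr 1; ring
  have e2 := hcan (1 + |t - a₂ * x ^ 3|) b (by positivity)
  have e3 := hcan (1 + |τ - t - a₂ * y ^ 3|) b (by positivity)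
  have e4 : (1 + |x|) ^ (s + ρ) = (1 + |x|) ^ s * (1 + |x|) ^ ρ := Real.rpow_add p2 _ _
  have e5 : (1 + |y|) ^ (s + ρ) = (1 + |y|) ^ s * (1 + |y|) ^ ρ := Real.rpow_add p3 _ _
  rw [e1]
  calc _ ≤ Real.exp (σ * |x|) * Real.exp (σ * |y|) *
        ((1 + |x + y|) ^ (-ρ) * ((1 + |x|) ^ (s + ρ) * (1 + |y|) ^ (s + ρ))) *
        (1 + |τ - a₁ * (x + y) ^ 3|) ^ (-(α / 2)) * |x + y| := by gcongr
    _ = Real.exp (σ * |x|) * Real.exp (σ * |y|) *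
        ((1 + |x + y|) ^ (-ρ) * ((1 + |x|) ^ (s + ρ) * (1 + |y|) ^ (s + ρ))) *
        (1 + |τ - a₁ * (x + y) ^ 3|) ^ (-(α / 2)) * |x + y| *
        (((1 + |t - a₂ * x ^ 3|) ^ (-b) * (1 + |t - a₂ * x ^ 3|) ^ b) *
        ((1 + |τ - t - a₂ * y ^ 3|) ^ (-b) * (1 + |τ - t - a₂ * y ^ 3|) ^ b)) := by
        rw [e2, e3]; ring
    _ = _ := by rw [e4, e5]; ring

@[fun_prop]
lemma mm_meas (a₁ a₂ ρ α β : ℝ) : Measurable (mm a₁ a₂ ρ α β) := by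
  unfold mm Qm
  fun_prop

lemma sqrt_three {m D a b c : ℝ} (hD : 0 ≤ D) (ha : 0 ≤ a) (hb : 0 ≤ b) (hc : 0 ≤ c)
    (h : m ≤ D * (a + b + c)) : √m ≤ √D * (√a + √b + √c) := by
  rw [Real.sqrt_le_iff]
  refine ⟨by positivity, h.trans ?_⟩
  rw [mul_pow, Real.sq_sqrt hD]
  gcongr
  have := Real.sq_sqrt ha
  have := Real.sq_sqrt hb
  have := Real.sq_sqrt hc
  nlinarith [mul_nonneg (Real.sqrt_nonneg a) (Real.sqrt_nonneg b),
    mul_nonneg (Real.sqrt_nonneg a) (Real.sqrt_nonneg c),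
    mul_nonneg (Real.sqrt_nonneg b) (Real.sqrt_nonneg c)]

lemma ofReal_sqrt_sq {w : ℝ} (h : 0 ≤ w) : ENNReal.ofReal (√w) ^ 2 = ENNReal.ofReal w := by
  rw [← ENNReal.ofReal_pow (Real.sqrt_nonneg _), Real.sq_sqrt h]

/-- Bilinear estimate (3.2): for `a₁, a₂ ≠ 0` with `a₂/a₁ < 0`, `a₂/a₁ = 1` or
`a₂/a₁ > 4`, and `s > −3/4`, there exist `b ∈ (1/2,1)`, `ε > 0` and `C > 0`
such that for all `σ ≥ 0`, all `b' ∈ [b, b+ε)` and all Schwartz `f, g`: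
`‖∂_x(fg)‖_{X_{a₁}^{σ,s,b'−1}} ≤ C ‖f‖_{X_{a₂}^{σ,s,b}} ‖g‖_{X_{a₂}^{σ,s,b}}`. -/
theorem bilinear_vv (a₁ a₂ s : ℝ) (ha₁ : a₁ ≠ 0) (ha₂ : a₂ ≠ 0)
    (hratio : a₂ / a₁ < 0 ∨ a₂ / a₁ = 1 ∨ 4 < a₂ / a₁) (hs : -(3/4) < s) :
    ∃ b ∈ Set.Ioo (1/2 : ℝ) 1, ∃ ε : ℝ, 0 < ε ∧ ∃ C : ℝ, 0 < C ∧
      ∀ σ : ℝ, 0 ≤ σ → ∀ b' ∈ Set.Ico b (b + ε),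
        ∀ f g : SchwartzMap (ℝ × ℝ) ℂ,
          XNorm a₁ σ s (b' - 1) (fun t x => deriv (fun y => f (t, y) * g (t, y)) x) ≤
            ENNReal.ofReal C *
              (XNorm a₂ σ s b (fun t x => f (t, x)) * XNorm a₂ σ s b (fun t x => g (t, x))) := by
  obtain ⟨ρ, hρ0, hρ1, hsρ⟩ : ∃ ρ : ℝ, 5/8 ≤ ρ ∧ ρ < 3/4 ∧ 0 ≤ s + ρ :=
    ⟨max (-s) (5/8), le_max_right _ _, max_lt (by linarith) (by norm_num),
      by linarith [le_max_left (-s) (5/8)]⟩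
  obtain ⟨δ, hδ⟩ : ∃ δ : ℝ, δ = (3/4 - ρ) / 12 := ⟨_, rfl⟩
  have hδ0 : 0 < δ := by linarith
  have hδ1 : δ ≤ 1/96 := by linarith
  obtain ⟨α, hα⟩ : ∃ α : ℝ, α = 1 - 4 * δ := ⟨_, rfl⟩
  obtain ⟨b, hb⟩ : ∃ b : ℝ, b = 1/2 + δ := ⟨_, rfl⟩
  obtain ⟨c, k, l, hc, hG, hr⟩ := geom ha₁ hratio
  have hβ : 1 < 2 * b := by linarith
  obtain ⟨D, hD, hpt⟩ := pointwise ha₁ ha₂ hratio (ρ := ρ) (α := α) (β := 2 * b) hρ0 hρ1.le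
    (by linarith) (by linarith) hβ.le (by linarith) (by linarith) (by linarith) hc hG
  obtain ⟨CA, hCA, hA⟩ := supA ha₂ hβ
  obtain ⟨CB, hCB, hB⟩ := supB (k := k) (l := l) hβ hr
  set C₀ : ℝ≥0∞ := CA + CB + 1 with hC₀
  have hC1 : C₀ ≤ C₀ ^ 2 := by
    rw [sq]
    exact le_mul_of_one_le_left (by positivity) le_add_self
  have hCfin : C₀ ≠ ⊤ := by finiteness
  set T : ℝ≥0∞ := ENNReal.ofReal √D * (3 * C₀) with hT
  have hTfin : T ≠ ⊤ := by finiteness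
  refine ⟨b, ⟨by linarith, by linarith⟩, δ, hδ0, T.toReal + 1, by positivity, ?_⟩
  intro σ hσ b' hb' f g
  have hTle : T ≤ ENNReal.ofReal (T.toReal + 1) := by
    rw [← ENNReal.ofReal_toReal hTfin]
    apply ENNReal.ofReal_le_ofReal
    rw [ENNReal.toReal_ofReal (by positivity)]
    linarith
  have mf := (FT2_cont f).measurable
  have mg := (FT2_cont g).measurable
  have mfg := (FT2_main_cont f g).measurable
  rw [XNorm_eq (FT2_main_cont f g), XNorm_eq (FT2_cont f), XNorm_eq (FT2_cont g)]
  refine le_trans ?_ (mul_le_mul_left hTle _)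
  refine bilinear_abstract (WA := fun p => ENNReal.ofReal √(wA a₂ (2 * b) p))
    (WB := fun p => ENNReal.ofReal √(wB a₁ a₂ k l (2 * b) p))
    (M := fun p => ENNReal.ofReal √(mm a₁ a₂ ρ α (2 * b) p))
    (by fun_prop) (by fun_prop) (by fun_prop) (by fun_prop) (by fun_prop) (by fun_prop)
    (C := C₀) (D := ENNReal.ofReal √D) ?_ ?_ ?_ ?_
  · intro z
    simp only [ofReal_sqrt_sq (wA_nonneg _ _ _)]
    refine (hA z).trans (le_trans ?_ hC1)
    rw [hC₀, add_assoc]; exact le_self_add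
  · intro w
    simp only [ofReal_sqrt_sq (wB_nonneg _ _ _ _ _ _)]
    refine (hB w).trans (le_trans ?_ hC1)
    rw [hC₀, add_comm CA, add_assoc]; exact le_self_add
  · intro p
    rw [← ENNReal.ofReal_add (by positivity) (by positivity), ← ENNReal.ofReal_add (by positivity) (by positivity),
      ← ENNReal.ofReal_mul (by positivity)]
    apply ENNReal.ofReal_le_ofReal
    exact sqrt_three hD (wA_nonneg _ _ _) (wB_nonneg _ _ _ _ _ _) (wB_nonneg _ _ _ _ _ _) (hpt p)
  · rintro z
    rw [ENNReal.ofReal_mul (wt_pos _ _ _ _ _).le]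
    calc _ ≤ ENNReal.ofReal (wt a₁ σ s (b' - 1) z) * (ENNReal.ofReal |z.2| *
          ∫⁻ w : ℝ × ℝ, ENNReal.ofReal ‖FT2 (fun t x => f (t, x)) w.1 w.2‖ *
            ENNReal.ofReal ‖FT2 (fun t x => g (t, x)) (z.1 - w.1) (z.2 - w.2)‖) := by
          gcongr
          exact FT2_main f g z.1 z.2
      _ = ∫⁻ w : ℝ × ℝ, ENNReal.ofReal (wt a₁ σ s (b' - 1) z * |z.2|) *
            (ENNReal.ofReal ‖FT2 (fun t x => f (t, x)) w.1 w.2‖ *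
            ENNReal.ofReal ‖FT2 (fun t x => g (t, x)) (z.1 - w.1) (z.2 - w.2)‖) := by
          rw [← mul_assoc, ← ENNReal.ofReal_mul (wt_pos _ _ _ _ _).le, lintegral_const_mul' _ _ ENNReal.ofReal_ne_top]
      _ ≤ _ := by
          apply lintegral_mono
          intro w
          simp only
          have h1 := (wt_pos a₂ σ s b w).le
          have h2 := (wt_pos a₂ σ s b (z - w)).le
          have h3 := (wt_pos a₁ σ s (b' - 1) z).le
          rw [← ENNReal.ofReal_mul (by positivity), ← ENNReal.ofReal_mul (by positivity),
            ← ENNReal.ofReal_mul (by positivity), ← ENNReal.ofReal_mul (by positivity)]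
          apply ENNReal.ofReal_le_ofReal
          have hm := mult_bound (a₁ := a₁) (a₂ := a₂) (ρ := ρ) (α := α) (b := b) (b' := b') (s := s) hσ hsρ
            (by have := hb'.2; linarith) z w
          simp only [Prod.fst_sub, Prod.snd_sub]
          calc _ ≤ (√(mm a₁ a₂ ρ α (2 * b) (z, w)) * wt a₂ σ s b w * wt a₂ σ s b (z - w)) *
              (‖FT2 (fun t x => f (t, x)) w.1 w.2‖ * ‖FT2 (fun t x => g (t, x)) (z.1 - w.1) (z.2 - w.2)‖) := by
                gcongr
            _ = _ := by ring
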